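/- Let n ≥ 3, let ε : {1, …, n} → {±1} be a function taking the value −1 at least once and the value +1 at least once, and let f ∈ Aut(F_n) be the automorphism with f(x_i) = x_i^{ε(i)} for all i. Then IA_n ⊆ N(f), and N(f) = ρ⁻¹(Γ_n(2)) if ∏_i ε(i) = 1, while N(f) = ρ⁻¹(GΓ_n(2)) if ∏_i ε(i) = −1 (equivalently, there is a short exact sequence 1 → IA_n → N(f) → Γ_n(2) → 1, respectively 1 → IA_n → N(f) → GΓ_n(2) → 1). -/

import Mathlib

open Matrix

namespace NormalClosurePaper

/-- The automorphism group of the free group on `n` generators. -/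
abbrev FrAut (n : ℕ) := MulAut (FreeGroup (Fin n))

/-- Exponent sum of the generator `x_i` in a word of the free group. -/
def expSum {n : ℕ} (i : Fin n) : FreeGroup (Fin n) →* Multiplicative ℤ :=
  FreeGroup.lift fun j => Multiplicative.ofAdd (if j = i then (1 : ℤ) else 0)

/-- The abelianized matrix of an automorphism of the free group:
the `(i, j)` entry is the exponent sum of `x_i` in `f x_j`. -/
def mat {n : ℕ} (f : FrAut n) : Matrix (Fin n) (Fin n) ℤ :=
  Matrix.of fun i j => (expSum i (f (FreeGroup.of j))).toAdd

lemma expSum_apply {n : ℕ} (f : FrAut n) (i : Fin n) (w : FreeGroup (Fin n)) :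
    (expSum i (f w)).toAdd = ∑ k, mat f i k * (expSum k w).toAdd := by
  induction w using FreeGroup.induction_on with
  | C1 => simp
  | of j =>
      have h : (expSum i (f (FreeGroup.of j))).toAdd = mat f i j := rfl
      rw [h]
      simp [expSum, mul_ite, Finset.sum_ite_eq]
  | inv_of j ih =>
      simp only [_root_.map_inv, toAdd_inv, mul_neg, Finset.sum_neg_distrib, ih]
  | mul x y ihx ihy =>
      simp only [_root_.map_mul, toAdd_mul, mul_add, Finset.sum_add_distrib, ihx, ihy]

lemma mat_one {n : ℕ} : mat (1 : FrAut n) = 1 := by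
  ext i j
  simp [mat, expSum, Matrix.one_apply, eq_comm]

lemma mat_mul {n : ℕ} (f g : FrAut n) : mat (f * g) = mat f * mat g := by
  ext i j
  rw [Matrix.mul_apply]
  show (expSum i ((f * g) (FreeGroup.of j))).toAdd = _
  rw [show (f * g) (FreeGroup.of j) = f (g (FreeGroup.of j)) from rfl, expSum_apply]
  rfl

/-- The matrix of the induced map on the abelianization, as a monoid homomorphism. -/
def matHom (n : ℕ) : FrAut n →* Matrix (Fin n) (Fin n) ℤ where
  toFun := mat
  map_one' := mat_one
  map_mul' := mat_mul

/-- The homomorphism `Aut(F_n) → GL_n(ℤ)` induced by abelianization. -/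
def ρ (n : ℕ) : FrAut n →* GL (Fin n) ℤ := (matHom n).toHomUnits

/-- The composition of `ρ` with the determinant. -/
def detρ (n : ℕ) : FrAut n →* ℤˣ := (Matrix.GeneralLinearGroup.det).comp (ρ n)

/-- The special automorphism group `SAut(F_n)`: automorphisms whose induced matrix
has determinant `1`. -/
def SAut (n : ℕ) : Subgroup (FrAut n) := (detρ n).ker

/-- The Torelli subgroup `IA_n`, the kernel of `ρ`. -/
def IA (n : ℕ) : Subgroup (FrAut n) := (ρ n).ker

/-- The group of inner automorphisms of the free group. -/
def Inn (n : ℕ) : Subgroup (FrAut n) := (MulAut.conj (G := FreeGroup (Fin n))).range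

instance Inn_normal (n : ℕ) : (Inn n).Normal := by
  constructor
  rintro - ⟨a, rfl⟩ g
  refine ⟨g a, ?_⟩
  ext y
  simp [MulAut.conj_apply, MulAut.mul_apply, _root_.map_mul, _root_.map_inv]

/-- The outer automorphism group `Out(F_n)`. -/
abbrev OutF (n : ℕ) := FrAut n ⧸ Inn n

/-- The projection `Aut(F_n) → Out(F_n)`. -/
def toOut (n : ℕ) : FrAut n →* OutF n := QuotientGroup.mk' (Inn n)

lemma mat_conj {n : ℕ} (g : FreeGroup (Fin n)) : mat (MulAut.conj g) = 1 := by
  rw [← mat_one (n := n)]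
  ext i j
  simp only [mat, Matrix.of_apply, MulAut.conj_apply, MulAut.one_apply, _root_.map_mul,
    _root_.map_inv, toAdd_mul, toAdd_inv]
  omega

lemma ρ_conj {n : ℕ} (g : FreeGroup (Fin n)) : ρ n (MulAut.conj g) = 1 :=
  Units.ext (mat_conj g)

/-- The homomorphism `Out(F_n) → GL_n(ℤ)` induced by abelianization. -/
def ρOut (n : ℕ) : OutF n →* GL (Fin n) ℤ :=
  QuotientGroup.lift (Inn n) (ρ n) (by rintro - ⟨g, rfl⟩; exact ρ_conj g)

/-- The composition of `ρOut` with the determinant. -/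
def detρOut (n : ℕ) : OutF n →* ℤˣ := (Matrix.GeneralLinearGroup.det).comp (ρOut n)

/-- The special outer automorphism group `SOut(F_n)`. -/
def SOut (n : ℕ) : Subgroup (OutF n) := (detρOut n).ker

/-- Entrywise reduction `GL_n(ℤ) → GL_n(ℤ/ℓℤ)`. -/
def redGL (n ℓ : ℕ) : GL (Fin n) ℤ →* GL (Fin n) (ZMod ℓ) :=
  Units.map (RingHom.mapMatrix (Int.castRingHom (ZMod ℓ))).toMonoidHom

/-- The subgroup `GΓ_n(ℓ)` of `GL_n(ℤ)` of matrices congruent to the identity mod `ℓ`. -/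
def GGamma (n ℓ : ℕ) : Subgroup (GL (Fin n) ℤ) := (redGL n ℓ).ker

/-- The level `ℓ` congruence subgroup `Γ_n(ℓ)` (viewed inside `GL_n(ℤ)`): matrices with
determinant `1` that are congruent to the identity mod `ℓ`. -/
def GammaGL (n ℓ : ℕ) : Subgroup (GL (Fin n) ℤ) :=
  GGamma n ℓ ⊓ (Matrix.GeneralLinearGroup.det).ker

/-- Reduction `SL_n(ℤ) → SL_n(ℤ/ℓℤ)`. -/
def redSL (n ℓ : ℕ) : Matrix.SpecialLinearGroup (Fin n) ℤ →*
    Matrix.SpecialLinearGroup (Fin n) (ZMod ℓ) :=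
  Matrix.SpecialLinearGroup.map (Int.castRingHom (ZMod ℓ))

/-- Projection `SL_n(ℤ/ℓℤ) → PSL_n(ℤ/ℓℤ)`. -/
def projPSL (n ℓ : ℕ) : Matrix.SpecialLinearGroup (Fin n) (ZMod ℓ) →*
    Matrix.ProjectiveSpecialLinearGroup (Fin n) (ZMod ℓ) :=
  QuotientGroup.mk' _

/-!
Let `q` be the quotient map of `Aut(F_n)` by `N(f)`. Permuting the generators, `q` kills, for any
`i ≠ j`, a partial inversion that inverts `x_i` and fixes `x_j`. Conjugation by such inversions
shows that, for fixed `i ≠ j`, the four transvections `x_j ↦ x_i^{±1} x_j` and `x_j ↦ x_j x_i^{±1}`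
have the same image under `q`, so these images satisfy the Steinberg relations over `𝔽₂`; products
of such inversions show that the image of `x_k ↦ x_k^{δ k}` depends only on `∏ δ`, so that it
commutes with the transvections. By Nielsen's theorem every element of `Aut(F_n)` is therefore,
modulo `N(f)`, a product of right transvections and one sign automorphism. For `n ≥ 3` the
Steinberg relations over `𝔽₂` define `GL_n(𝔽₂)`, so an automorphism which is trivial modulo 2 agrees
modulo `N(f)` with a sign automorphism, and this one is controlled by the determinant.

Nielsen's theorem is proved by descent on a weight that orders words by length and breaks ties by
comparing the halves of a word: the images of the letters under an automorphism of minimal weight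
never absorb each other, so an automorphism of minimal weight does not shorten words, and its
inverse maps generators to letters.

The faithfulness of the Steinberg relations is an induction on the number of indices. The group acts
on the cosets of the stabilizer of a basis vector, and every coset contains a product of a column
and a Weyl element, which is determined by its matrix. Hence an element with trivial matrix lies in
the stabilizer, where it is the product of a row, which has to vanish, and of an element of a
smaller block.
-/

/-! ### Nielsen's theorem -/

section CommonPrefix

variable {β : Type*} [DecidableEq β]

/-- The length of the longest common prefix of two lists. -/
def commonPrefixLength : List β → List β → ℕ
  | a :: l, b :: m => if a = b then commonPrefixLength l m + 1 else 0
  | _, _ => 0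

lemma le_commonPrefixLength_iff {k : ℕ} {l m : List β} :
    k ≤ commonPrefixLength l m ↔ k ≤ l.length ∧ k ≤ m.length ∧ l.take k = m.take k := by
  induction l generalizing m k with
  | nil => cases k <;> simp [commonPrefixLength]
  | cons a l ih =>
    cases m with
    | nil => cases k <;> simp [commonPrefixLength]
    | cons b m =>
      cases k with
      | zero => simp
      | succ k => by_cases hab : a = b <;> simp [commonPrefixLength, hab, ih]

lemma commonPrefixLength_comm (l m : List β) :
    commonPrefixLength l m = commonPrefixLength m l :=
  eq_of_forall_le_iff fun k => by
    rw [le_commonPrefixLength_iff, le_commonPrefixLength_iff]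
    tauto

lemma min_commonPrefixLength_le (x y z : List β) :
    min (commonPrefixLength x y) (commonPrefixLength y z) ≤ commonPrefixLength x z := by
  obtain ⟨hx, -, hxy⟩ := le_commonPrefixLength_iff.1
    (min_le_left (commonPrefixLength x y) (commonPrefixLength y z))
  obtain ⟨-, hz, hyz⟩ := le_commonPrefixLength_iff.1
    (min_le_right (commonPrefixLength x y) (commonPrefixLength y z))
  exact le_commonPrefixLength_iff.2 ⟨hx, hz, hxy.trans hyz⟩

lemma commonPrefixLength_eq_of_lt {x y z : List β}
    (h : commonPrefixLength x y < commonPrefixLength y z) :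
    commonPrefixLength x z = commonPrefixLength x y := by
  have hxz := min_commonPrefixLength_le x y z
  have hxy := min_commonPrefixLength_le x z y
  rw [commonPrefixLength_comm z y] at hxy
  omega

end CommonPrefix

section GromovProduct

variable {α : Type*} [DecidableEq α]

/-- The Gromov product of two elements of a free group, based at the identity: the length of the
common initial segment of their reduced words. -/
def gromovProduct (x y : FreeGroup α) : ℕ := commonPrefixLength x.toWord y.toWord

lemma gromovProduct_comm (x y : FreeGroup α) : gromovProduct x y = gromovProduct y x :=
  commonPrefixLength_comm _ _

lemma norm_mk_of_isReduced {l : List (α × Bool)} (hl : FreeGroup.IsReduced l) :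
    (FreeGroup.mk l).norm = l.length := by
  rw [FreeGroup.norm, FreeGroup.toWord_mk, hl.reduce_eq]

lemma toWord_of_norm_mk {l : List (α × Bool)} (h : (FreeGroup.mk l).norm = l.length) :
    (FreeGroup.mk l).toWord = l :=
  FreeGroup.reduce.red.sublist.eq_of_length h

lemma mk_cons {α : Type*} (a : α × Bool) (l : List (α × Bool)) :
    FreeGroup.mk (a :: l) = FreeGroup.mk [a] * FreeGroup.mk l := by
  rw [FreeGroup.mul_mk, List.singleton_append]

lemma isReduced_invRev {α : Type*} {l : List (α × Bool)} (hl : FreeGroup.IsReduced l) :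
    FreeGroup.IsReduced (FreeGroup.invRev l) := by
  classical
  rw [FreeGroup.isReduced_iff_reduce_eq, FreeGroup.reduce_invRev, hl.reduce_eq]

lemma isReduced_invRev_append {α : Type*} {a b : α × Bool} {l m : List (α × Bool)}
    (hl : FreeGroup.IsReduced (a :: l)) (hm : FreeGroup.IsReduced (b :: m)) (hab : a ≠ b) :
    FreeGroup.IsReduced (FreeGroup.invRev (a :: l) ++ b :: m) := by
  refine List.isChain_append.2 ⟨isReduced_invRev hl, hm, ?_⟩
  obtain ⟨a, s⟩ := a
  obtain ⟨b, t⟩ := b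
  cases s <;> cases t <;> simp_all [FreeGroup.invRev]

lemma norm_inv_mul_mk_add {l m : List (α × Bool)} (hl : FreeGroup.IsReduced l)
    (hm : FreeGroup.IsReduced m) :
    ((FreeGroup.mk l)⁻¹ * FreeGroup.mk m).norm + 2 * commonPrefixLength l m =
      l.length + m.length := by
  induction l generalizing m with
  | nil => simp [← FreeGroup.one_eq_mk, norm_mk_of_isReduced hm, commonPrefixLength]
  | cons a l ih =>
    cases m with
    | nil =>
      rw [← FreeGroup.one_eq_mk, mul_one, FreeGroup.norm_inv_eq, norm_mk_of_isReduced hl]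
      simp [commonPrefixLength]
    | cons b m =>
      by_cases hab : a = b
      · subst hab
        have h := ih (List.IsChain.tail hl) (List.IsChain.tail hm)
        rw [mk_cons a l, mk_cons a m, _root_.mul_inv_rev, mul_assoc, inv_mul_cancel_left]
        simp only [commonPrefixLength, if_true, List.length_cons, List.tail_cons] at h ⊢
        omega
      · rw [FreeGroup.inv_mk, FreeGroup.mul_mk,
          norm_mk_of_isReduced (isReduced_invRev_append hl hm hab)]
        simp [commonPrefixLength, hab]

lemma norm_mul_add_gromovProduct (x y : FreeGroup α) :
    (x * y).norm + 2 * gromovProduct x⁻¹ y = x.norm + y.norm := by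
  have h := norm_inv_mul_mk_add (FreeGroup.isReduced_toWord (x := x⁻¹))
    (FreeGroup.isReduced_toWord (x := y))
  rwa [FreeGroup.mk_toWord, FreeGroup.mk_toWord, inv_inv, ← FreeGroup.norm, ← FreeGroup.norm,
    FreeGroup.norm_inv_eq] at h

lemma gromovProduct_mul_add (x y : FreeGroup α) :
    gromovProduct x (x * y) + gromovProduct x⁻¹ y = x.norm := by
  have h₁ := norm_mul_add_gromovProduct x y
  have h₂ := norm_mul_add_gromovProduct x⁻¹ (x * y)
  rw [inv_mul_cancel_left, inv_inv, FreeGroup.norm_inv_eq] at h₂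
  omega

lemma two_mul_gromovProduct_inv_self_lt {v : FreeGroup α} (hv : v ≠ 1) :
    2 * gromovProduct v⁻¹ v < v.norm := by
  have hconj := FreeGroup.reduceCyclically.conj_conjugator_reduceCyclically v.toWord
  have hsq := FreeGroup.reduceCyclically.reduce_flatten_replicate_succ
    (FreeGroup.isReduced_toWord (x := v)) 1
  rw [one_add_one_eq_two, ← FreeGroup.toWord_pow] at hsq
  set c := FreeGroup.reduceCyclically.conjugator v.toWord
  set r := FreeGroup.reduceCyclically v.toWord
  have hr : r ≠ [] := by
    intro hr
    apply hv
    rw [← FreeGroup.mk_toWord (x := v), ← hconj, hr, List.append_nil, ← FreeGroup.mul_mk,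
      ← FreeGroup.inv_mk, mul_inv_cancel]
  have hr₀ := List.length_pos_iff.2 hr
  have h₁ := congrArg List.length hconj
  have h₂ := congrArg List.length hsq
  simp only [List.length_append, List.length_flatten, List.map_replicate, List.sum_replicate,
    FreeGroup.invRev_length, smul_eq_mul, pow_two] at h₁ h₂
  have h₃ := norm_mul_add_gromovProduct v v
  simp only [FreeGroup.norm] at h₃ ⊢
  omega

end GromovProduct

section NielsenReduced

variable {α β : Type*} [DecidableEq α]

/-- A homomorphism of free groups is Nielsen reduced if no image of a letter is absorbed by
cancellation against the images of its two neighbours in a reduced word. -/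
def IsNielsenReduced (φ : FreeGroup β →* FreeGroup α) : Prop :=
  ∀ a b c : β × Bool, FreeGroup.IsReduced [a, b, c] →
    gromovProduct (φ (FreeGroup.mk [a]))⁻¹ (φ (FreeGroup.mk [b])) +
      gromovProduct (φ (FreeGroup.mk [b]))⁻¹ (φ (FreeGroup.mk [c])) < (φ (FreeGroup.mk [b])).norm

namespace IsNielsenReduced

variable {φ : FreeGroup β →* FreeGroup α}

lemma gromovProduct_mk_cons (hφ : IsNielsenReduced φ) {a b : β × Bool} {L : List (β × Bool)}
    (hL : FreeGroup.IsReduced (a :: b :: L)) :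
    gromovProduct (φ (FreeGroup.mk [a]))⁻¹ (φ (FreeGroup.mk (b :: L))) =
      gromovProduct (φ (FreeGroup.mk [a]))⁻¹ (φ (FreeGroup.mk [b])) := by
  induction L generalizing a b with
  | nil => rfl
  | cons c L ih =>
    obtain ⟨-, hbcL⟩ := FreeGroup.isReduced_cons_cons.1 hL
    have habc : FreeGroup.IsReduced [a, b, c] := List.IsChain.left_of_append (l₁ := [a, b, c]) hL
    have hlt := hφ a b c habc
    have hadd := gromovProduct_mul_add (φ (FreeGroup.mk [b])) (φ (FreeGroup.mk (c :: L)))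
    rw [← _root_.map_mul, ← mk_cons, ih hbcL] at hadd
    exact commonPrefixLength_eq_of_lt (show gromovProduct _ _ < gromovProduct _ _ by omega)

lemma gromovProduct_add_lt (hφ : IsNielsenReduced φ) {a b : β × Bool} {L : List (β × Bool)}
    (hL : FreeGroup.IsReduced (a :: b :: L)) :
    gromovProduct (φ (FreeGroup.mk [a]))⁻¹ (φ (FreeGroup.mk (b :: L))) +
      gromovProduct (φ (FreeGroup.mk [b]))⁻¹ (φ (FreeGroup.mk L)) <
        (φ (FreeGroup.mk [b])).norm := by
  rw [hφ.gromovProduct_mk_cons hL]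
  obtain ⟨hab, hbL⟩ := FreeGroup.isReduced_cons_cons.1 hL
  cases L with
  | nil =>
    have hlt := hφ a b b (by simpa using hab)
    have h := norm_mul_add_gromovProduct (φ (FreeGroup.mk [b])) 1
    rw [mul_one, FreeGroup.norm_one] at h
    rw [← FreeGroup.one_eq_mk, _root_.map_one]
    omega
  | cons c L =>
    rw [hφ.gromovProduct_mk_cons hbL]
    exact hφ a b c (List.IsChain.left_of_append (l₁ := [a, b, c]) hL)

lemma length_add_norm_le (hφ : IsNielsenReduced φ) {a : β × Bool} {L : List (β × Bool)}
    (hL : FreeGroup.IsReduced (a :: L)) :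
    L.length + (φ (FreeGroup.mk [a])).norm ≤ (φ (FreeGroup.mk (a :: L))).norm +
      gromovProduct (φ (FreeGroup.mk [a]))⁻¹ (φ (FreeGroup.mk L)) := by
  induction L generalizing a with
  | nil => simp
  | cons b L ih =>
    have hlt := hφ.gromovProduct_add_lt hL
    have hbL := ih (FreeGroup.isReduced_cons_cons.1 hL).2
    have hnorm := norm_mul_add_gromovProduct (φ (FreeGroup.mk [a])) (φ (FreeGroup.mk (b :: L)))
    rw [← _root_.map_mul, ← mk_cons] at hnorm
    rw [List.length_cons]
    omega

theorem norm_le_norm_map [DecidableEq β] (hφ : IsNielsenReduced φ) (x : FreeGroup β) :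
    x.norm ≤ (φ x).norm := by
  obtain ⟨L, hL, rfl⟩ : ∃ L, FreeGroup.IsReduced L ∧ x = FreeGroup.mk L :=
    ⟨x.toWord, FreeGroup.isReduced_toWord, FreeGroup.mk_toWord.symm⟩
  rw [norm_mk_of_isReduced hL]
  cases L with
  | nil => simp
  | cons a L =>
    have hlen := hφ.length_add_norm_le hL
    have hlt := hφ.gromovProduct_add_lt
      (FreeGroup.isReduced_cons_cons.2 ⟨fun _ => rfl, hL⟩ : FreeGroup.IsReduced (a :: a :: L))
    rw [List.length_cons]
    omega

end IsNielsenReduced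

end NielsenReduced

section Halves

variable {α : Type*} [DecidableEq α]

/-- The first half of the reduced word of an element. -/
def firstHalf (v : FreeGroup α) : List (α × Bool) := v.toWord.take (v.norm / 2)

lemma eq_mk_firstHalf_mul_inv {v : FreeGroup α} (hv : Even v.norm) :
    v = FreeGroup.mk (firstHalf v) * (FreeGroup.mk (firstHalf v⁻¹))⁻¹ := by
  obtain ⟨k, hk⟩ := hv
  have hdrop : FreeGroup.invRev (firstHalf v⁻¹) = v.toWord.drop (v.norm / 2) := by
    have hlen : v.toWord.length = k + k := hk
    simp only [firstHalf, FreeGroup.norm_inv_eq, FreeGroup.toWord_inv, FreeGroup.invRev,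
      List.take_reverse, List.length_map, List.map_drop, List.map_reverse, List.reverse_reverse,
      List.map_map]
    simp [Function.comp_def, hlen, hk, show (k + k) / 2 = k by omega]
  rw [FreeGroup.inv_mk, hdrop, FreeGroup.mul_mk, firstHalf, List.take_append_drop,
    FreeGroup.mk_toWord]

lemma exists_toWord_eq_firstHalf_append {v w : FreeGroup α}
    (hv : v.norm = 2 * gromovProduct v⁻¹ w) :
    ∃ c, w.toWord = firstHalf v⁻¹ ++ c ∧ (v * w).toWord = firstHalf v ++ c := by
  obtain ⟨-, hkw, htake⟩ := le_commonPrefixLength_iff.1 (le_refl (gromovProduct v⁻¹ w))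
  have hhalf : firstHalf v⁻¹ = w.toWord.take (gromovProduct v⁻¹ w) := by
    rw [firstHalf, FreeGroup.norm_inv_eq, hv, Nat.mul_div_cancel_left _ two_pos, htake]
  set c := w.toWord.drop (gromovProduct v⁻¹ w) with hc
  have hw : w.toWord = firstHalf v⁻¹ ++ c := by rw [hhalf, hc, List.take_append_drop]
  have hmul : v * w = FreeGroup.mk (firstHalf v ++ c) := by
    calc v * w = FreeGroup.mk (firstHalf v) * (FreeGroup.mk (firstHalf v⁻¹))⁻¹ *
          FreeGroup.mk (firstHalf v⁻¹ ++ c) := by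
          rw [← hw, FreeGroup.mk_toWord, ← eq_mk_firstHalf_mul_inv (hv ▸ even_two_mul _)]
      _ = FreeGroup.mk (firstHalf v ++ c) := by
          rw [← FreeGroup.mul_mk, ← FreeGroup.mul_mk, mul_assoc, inv_mul_cancel_left]
  refine ⟨c, hw, hmul ▸ toWord_of_norm_mk ?_⟩
  have hnorm := norm_mul_add_gromovProduct v w
  rw [← hmul, List.length_append, hc, List.length_drop, firstHalf, List.length_take]
  simp only [FreeGroup.norm] at *
  omega

end Halves

section Weight

variable {α : Type*} [Fintype α]

/-- The base of the numeration of words by natural numbers in `wordCode`. -/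
def codeBase (α : Type*) [Fintype α] : ℕ := Fintype.card (α × Bool) + 2

/-- An injective numeration of the letters by nonzero digits below `codeBase α`. -/
noncomputable def letterDigit (a : α × Bool) : ℕ := Fintype.equivFin (α × Bool) a + 1

/-- The number whose digits in base `codeBase α`, most significant first, encode the letters of a
word. As no digit vanishes, it orders words first by length and then lexicographically. -/
noncomputable def wordCode (l : List (α × Bool)) : ℕ :=
  Nat.ofDigits (codeBase α) (l.map letterDigit).reverse

lemma letterDigit_injective : Function.Injective (letterDigit (α := α)) := fun _ _ h =>
  (Fintype.equivFin _).injective (Fin.ext (Nat.succ_injective h))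

lemma mem_reverse_map_letterDigit_lt {l : List (α × Bool)} :
    ∀ d ∈ (l.map letterDigit).reverse, d < codeBase α := by
  simp only [List.mem_reverse, List.mem_map, forall_exists_index, and_imp,
    forall_apply_eq_imp_iff₂, letterDigit, codeBase]
  intro a _
  exact Nat.succ_lt_succ ((Fintype.equivFin (α × Bool) a).isLt.trans (Nat.lt_succ_self _))

lemma one_lt_codeBase : 1 < codeBase α := by simp [codeBase]

lemma wordCode_append (p c : List (α × Bool)) :
    wordCode (p ++ c) = wordCode c + codeBase α ^ c.length * wordCode p := by
  simp only [wordCode, List.map_append, List.reverse_append, Nat.ofDigits_append,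
    List.length_reverse, List.length_map]

lemma wordCode_lt (l : List (α × Bool)) : wordCode l < codeBase α ^ l.length := by
  simpa [wordCode] using
    Nat.ofDigits_lt_base_pow_length one_lt_codeBase (mem_reverse_map_letterDigit_lt (l := l))

lemma wordCode_lt_of_length_lt {l m : List (α × Bool)} (h : l.length < m.length) :
    wordCode l < wordCode m := by
  obtain _ | ⟨a, m⟩ := m
  · simp at h
  calc wordCode l < codeBase α ^ l.length := wordCode_lt l
    _ ≤ codeBase α ^ m.length :=
      Nat.pow_le_pow_right (by simp [codeBase]) (Nat.le_of_lt_succ h)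
    _ ≤ codeBase α ^ m.length * wordCode [a] :=
      Nat.le_mul_of_pos_right _ (by rw [wordCode]; simp [letterDigit])
    _ ≤ wordCode ([a] ++ m) := wordCode_append [a] m ▸ Nat.le_add_left _ _

lemma wordCode_injective : Function.Injective (wordCode (α := α)) := by
  intro l m h
  have hlen : l.length = m.length := by
    by_contra hne
    rcases Nat.lt_or_gt_of_ne hne with hlt | hlt
    · exact (wordCode_lt_of_length_lt hlt).ne h
    · exact (wordCode_lt_of_length_lt hlt).ne' h
  exact letterDigit_injective.list_map <| List.reverse_injective <|
    Nat.ofDigits_inj_of_len_eq one_lt_codeBase (by simpa using hlen)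
      mem_reverse_map_letterDigit_lt mem_reverse_map_letterDigit_lt h

/-- Replacing the initial segment `q` of a word `q ++ c` with `2 |q| ≤ |q ++ c|` by a smaller one
of the same length decreases the code of the word by at least `B ^ |c|`, and increases the code of
its inverse by less than `B ^ |q|`. -/
lemma wordCode_append_add_lt {p q c : List (α × Bool)} (hpq : p.length = q.length)
    (hqc : q.length ≤ c.length) (hcode : wordCode p < wordCode q) :
    wordCode (p ++ c) + wordCode (FreeGroup.invRev (p ++ c)) <
      wordCode (q ++ c) + wordCode (FreeGroup.invRev (q ++ c)) := by
  have hpow : codeBase α ^ p.length ≤ codeBase α ^ c.length :=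
    Nat.pow_le_pow_right (by simp [codeBase]) (hpq.trans_le hqc)
  have hinv : wordCode (FreeGroup.invRev p) < codeBase α ^ p.length := by
    simpa using wordCode_lt (FreeGroup.invRev p)
  have hdrop := Nat.mul_le_mul_left (codeBase α ^ c.length) (Nat.succ_le_of_lt hcode)
  rw [Nat.mul_succ] at hdrop
  simp only [FreeGroup.invRev_append, wordCode_append, FreeGroup.invRev_length, hpq]
  rw [hpq] at hpow hinv
  omega

variable [DecidableEq α]

/-- The complexity of an element of a free group minimized in Nielsen's reduction process. -/
noncomputable def weight (w : FreeGroup α) : ℕ := wordCode w.toWord + wordCode w⁻¹.toWord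

lemma weight_inv (w : FreeGroup α) : weight w⁻¹ = weight w := by
  rw [weight, weight, inv_inv, add_comm]

lemma weight_lt_of_norm_lt {v w : FreeGroup α} (h : v.norm < w.norm) : weight v < weight w :=
  add_lt_add (wordCode_lt_of_length_lt h)
    (wordCode_lt_of_length_lt <| show v⁻¹.norm < w⁻¹.norm by
      rwa [FreeGroup.norm_inv_eq, FreeGroup.norm_inv_eq])

lemma wordCode_firstHalf_ne {v : FreeGroup α} (hv : Even v.norm) (hv₁ : v ≠ 1) :
    wordCode (firstHalf v) ≠ wordCode (firstHalf v⁻¹) := by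
  intro h
  apply hv₁
  rw [eq_mk_firstHalf_mul_inv hv, wordCode_injective h, mul_inv_cancel]

lemma weight_mul_lt {v w : FreeGroup α} (hv : v.norm = 2 * gromovProduct v⁻¹ w)
    (hvw : v.norm ≤ w.norm) (hcode : wordCode (firstHalf v) < wordCode (firstHalf v⁻¹)) :
    weight (v * w) < weight w := by
  obtain ⟨c, hw, hmul⟩ := exists_toWord_eq_firstHalf_append hv
  have hlen (u : FreeGroup α) : (firstHalf u).length = u.norm / 2 := by
    rw [firstHalf, List.length_take, ← FreeGroup.norm]
    omega
  have hwc : w.norm = (firstHalf v⁻¹ ++ c).length := by rw [FreeGroup.norm, hw]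
  rw [List.length_append, hlen, FreeGroup.norm_inv_eq] at hwc
  rw [weight, weight, FreeGroup.toWord_inv, FreeGroup.toWord_inv, hmul, hw]
  refine wordCode_append_add_lt ?_ ?_ hcode
  · rw [hlen, hlen, FreeGroup.norm_inv_eq]
  · rw [hlen, FreeGroup.norm_inv_eq]
    omega

end Weight

section Minimal

variable {α β : Type*} [DecidableEq α] [Fintype α]

/-- A homomorphism of free groups has minimal weight if no multiplication of the image of one
letter by the image of another one on the left decreases its weight. -/
def HasMinimalWeight (φ : FreeGroup β →* FreeGroup α) : Prop :=
  ∀ a b : β × Bool, a.1 ≠ b.1 →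
    weight (φ (FreeGroup.mk [b])) ≤ weight (φ (FreeGroup.mk [a]) * φ (FreeGroup.mk [b]))

lemma mk_letter_inv {α : Type*} (a : α × Bool) :
    (FreeGroup.mk [a])⁻¹ = FreeGroup.mk [(a.1, !a.2)] := rfl

namespace HasMinimalWeight

variable {φ : FreeGroup β →* FreeGroup α}

lemma norm_le_norm_mul (hφ : HasMinimalWeight φ) {a b : β × Bool} (hab : a.1 ≠ b.1) :
    (φ (FreeGroup.mk [b])).norm ≤ (φ (FreeGroup.mk [a]) * φ (FreeGroup.mk [b])).norm :=
  not_lt.1 fun h => (weight_lt_of_norm_lt h).not_ge (hφ a b hab)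

lemma two_mul_gromovProduct_le_right (hφ : HasMinimalWeight φ)
    (h₁ : ∀ b, φ (FreeGroup.mk [b]) ≠ 1) {a b : β × Bool} (hab : FreeGroup.IsReduced [a, b]) :
    2 * gromovProduct (φ (FreeGroup.mk [a]))⁻¹ (φ (FreeGroup.mk [b])) ≤
      (φ (FreeGroup.mk [b])).norm := by
  by_cases h : a.1 = b.1
  · obtain rfl : a = b := Prod.ext h ((FreeGroup.isReduced_cons_cons.1 hab).1 h)
    exact (two_mul_gromovProduct_inv_self_lt (h₁ a)).le
  · have hle := hφ.norm_le_norm_mul (a := (b.1, !b.2)) (b := (a.1, !a.2)) (Ne.symm h)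
    have hadd := norm_mul_add_gromovProduct (φ (FreeGroup.mk [a])) (φ (FreeGroup.mk [b]))
    rw [← mk_letter_inv, ← mk_letter_inv, _root_.map_inv, _root_.map_inv,
      ← _root_.mul_inv_rev, FreeGroup.norm_inv_eq, FreeGroup.norm_inv_eq] at hle
    omega

lemma two_mul_gromovProduct_le_left (hφ : HasMinimalWeight φ)
    (h₁ : ∀ b, φ (FreeGroup.mk [b]) ≠ 1) {a b : β × Bool} (hab : FreeGroup.IsReduced [a, b]) :
    2 * gromovProduct (φ (FreeGroup.mk [a]))⁻¹ (φ (FreeGroup.mk [b])) ≤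
      (φ (FreeGroup.mk [a])).norm := by
  have h := hφ.two_mul_gromovProduct_le_right h₁ (isReduced_invRev hab)
  rwa [← mk_letter_inv, ← mk_letter_inv, _root_.map_inv, _root_.map_inv, inv_inv,
    gromovProduct_comm, FreeGroup.norm_inv_eq] at h

lemma wordCode_firstHalf_inv_le (hφ : HasMinimalWeight φ)
    (h₁ : ∀ b, φ (FreeGroup.mk [b]) ≠ 1) {b c : β × Bool} (hbc : FreeGroup.IsReduced [b, c])
    (hb : (φ (FreeGroup.mk [b])).norm =
      2 * gromovProduct (φ (FreeGroup.mk [b]))⁻¹ (φ (FreeGroup.mk [c]))) :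
    wordCode (firstHalf (φ (FreeGroup.mk [b]))⁻¹) ≤
      wordCode (firstHalf (φ (FreeGroup.mk [b]))) := by
  by_cases h : b.1 = c.1
  · obtain rfl : b = c := Prod.ext h ((FreeGroup.isReduced_cons_cons.1 hbc).1 h)
    exact absurd hb.symm (two_mul_gromovProduct_inv_self_lt (h₁ b)).ne
  · by_contra! hlt
    exact (hφ b c h).not_gt
      (weight_mul_lt hb (hb ▸ hφ.two_mul_gromovProduct_le_right h₁ hbc) hlt)

/-- If the image `v` of `b` were absorbed by its two neighbours, each would cancel exactly one
half of `v`; minimality on both sides then forces `v` and `v⁻¹` to have equal first halves. -/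
theorem isNielsenReduced (hφ : HasMinimalWeight φ) (h₁ : ∀ b, φ (FreeGroup.mk [b]) ≠ 1) :
    IsNielsenReduced φ := by
  intro a b c habc
  have hab : FreeGroup.IsReduced [a, b] := List.IsChain.left_of_append (l₁ := [a, b]) habc
  have hbc : FreeGroup.IsReduced [b, c] := List.IsChain.tail habc
  by_contra! hle
  have hleft := hφ.two_mul_gromovProduct_le_right h₁ hab
  have hright := hφ.two_mul_gromovProduct_le_left h₁ hbc
  have hb : (φ (FreeGroup.mk [b])).norm =
      2 * gromovProduct (φ (FreeGroup.mk [b]))⁻¹ (φ (FreeGroup.mk [c])) := by omega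
  have hle₁ := hφ.wordCode_firstHalf_inv_le h₁ hbc hb
  have hle₂ := hφ.wordCode_firstHalf_inv_le h₁ (isReduced_invRev hab) <| by
    rw [← mk_letter_inv, ← mk_letter_inv, _root_.map_inv, _root_.map_inv, inv_inv,
      gromovProduct_comm, FreeGroup.norm_inv_eq]
    omega
  rw [← mk_letter_inv, _root_.map_inv, inv_inv] at hle₂
  exact wordCode_firstHalf_ne (hb ▸ even_two_mul _) (h₁ b) (hle₂.antisymm hle₁)

end HasMinimalWeight

end Minimal

section Automorphisms

variable {α : Type*}

lemma mulAut_freeGroup_ext {φ ψ : MulAut (FreeGroup α)}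
    (h : ∀ k, φ (FreeGroup.of k) = ψ (FreeGroup.of k)) : φ = ψ :=
  MulEquiv.toMonoidHom_injective (FreeGroup.ext_hom _ _ h)

/-- The endomorphism `x_k ↦ x_k ^ δ k`. -/
def signHom (δ : α → ℤˣ) : FreeGroup α →* FreeGroup α :=
  FreeGroup.lift fun k => FreeGroup.of k ^ (δ k : ℤ)

lemma signHom_comp (δ η : α → ℤˣ) : (signHom δ).comp (signHom η) = signHom (δ * η) :=
  FreeGroup.ext_hom _ _ fun k => by simp [signHom, _root_.zpow_mul]

lemma signHom_one : signHom (1 : α → ℤˣ) = MonoidHom.id _ :=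
  FreeGroup.ext_hom _ _ fun k => by simp [signHom]

lemma signHom_comp_self (δ : α → ℤˣ) : (signHom δ).comp (signHom δ) = MonoidHom.id _ := by
  rw [signHom_comp, show δ * δ = 1 from funext fun k => Int.units_mul_self (δ k), signHom_one]

/-- The automorphisms `x_k ↦ x_k ^ δ k`. -/
def signAut : (α → ℤˣ) →* MulAut (FreeGroup α) where
  toFun δ := MonoidHom.toMulEquiv (signHom δ) (signHom δ) (signHom_comp_self δ)
    (signHom_comp_self δ)
  map_one' := MulEquiv.toMonoidHom_injective signHom_one
  map_mul' δ η := MulEquiv.toMonoidHom_injective (signHom_comp δ η).symm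

@[simp]
lemma signAut_of (δ : α → ℤˣ) (k : α) : signAut δ (FreeGroup.of k) = FreeGroup.of k ^ (δ k : ℤ) :=
  FreeGroup.lift_apply_of

/-- The automorphisms `x_k ↦ x_{σ k}`. -/
def permAut : Equiv.Perm α →* MulAut (FreeGroup α) where
  toFun σ := FreeGroup.freeGroupCongr σ
  map_one' := FreeGroup.freeGroupCongr_refl
  map_mul' σ τ := (FreeGroup.freeGroupCongr_trans τ σ).symm

@[simp]
lemma permAut_of (σ : Equiv.Perm α) (k : α) : permAut σ (FreeGroup.of k) = FreeGroup.of (σ k) := by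
  simp [permAut]

variable [DecidableEq α]

/-- The endomorphism `x_j ↦ x_i ^ a * x_j * x_i ^ b` fixing the other generators. -/
def transvectionHom (i j : α) (a b : ℤ) : FreeGroup α →* FreeGroup α :=
  FreeGroup.lift fun k =>
    if k = j then FreeGroup.of i ^ a * FreeGroup.of j * FreeGroup.of i ^ b else FreeGroup.of k

lemma transvectionHom_of_same (i j : α) (a b : ℤ) :
    transvectionHom i j a b (FreeGroup.of j) =
      FreeGroup.of i ^ a * FreeGroup.of j * FreeGroup.of i ^ b := by
  simp [transvectionHom]

lemma transvectionHom_of_ne (i : α) {j k : α} (h : k ≠ j) (a b : ℤ) :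
    transvectionHom i j a b (FreeGroup.of k) = FreeGroup.of k := by
  simp [transvectionHom, h]

lemma transvectionHom_comp {i j : α} (h : i ≠ j) (a b c d : ℤ) :
    (transvectionHom i j a b).comp (transvectionHom i j c d) =
      transvectionHom i j (c + a) (b + d) := by
  refine FreeGroup.ext_hom _ _ fun k => ?_
  rw [MonoidHom.comp_apply]
  by_cases hk : k = j
  · subst hk
    simp only [transvectionHom_of_same, _root_.map_mul, map_zpow, transvectionHom_of_ne i h,
      _root_.zpow_add, mul_assoc]
  · simp only [transvectionHom_of_ne i hk]

lemma transvectionHom_zero (i j : α) : transvectionHom i j 0 0 = MonoidHom.id _ := by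
  refine FreeGroup.ext_hom _ _ fun k => ?_
  by_cases hk : k = j
  · subst hk; simp [transvectionHom_of_same]
  · simp [transvectionHom_of_ne i hk]

/-- The automorphism `x_j ↦ x_i ^ a * x_j * x_i ^ b` fixing the other generators. -/
def transvectionAut {i j : α} (h : i ≠ j) (a b : ℤ) : MulAut (FreeGroup α) :=
  MonoidHom.toMulEquiv (transvectionHom i j a b) (transvectionHom i j (-a) (-b))
    (by rw [transvectionHom_comp h, add_neg_cancel, neg_add_cancel, transvectionHom_zero])
    (by rw [transvectionHom_comp h, neg_add_cancel, add_neg_cancel, transvectionHom_zero])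

@[simp]
lemma transvectionAut_of_same {i j : α} (h : i ≠ j) (a b : ℤ) :
    transvectionAut h a b (FreeGroup.of j) =
      FreeGroup.of i ^ a * FreeGroup.of j * FreeGroup.of i ^ b :=
  transvectionHom_of_same i j a b

lemma transvectionAut_of_ne {i j k : α} (h : i ≠ j) (hk : k ≠ j) (a b : ℤ) :
    transvectionAut h a b (FreeGroup.of k) = FreeGroup.of k :=
  transvectionHom_of_ne i hk a b

lemma transvectionAut_inv {i j : α} (h : i ≠ j) (a b : ℤ) :
    (transvectionAut h a b)⁻¹ = transvectionAut h (-a) (-b) :=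
  inv_eq_of_mul_eq_one_right <| MulEquiv.toMonoidHom_injective <|
    (transvectionHom_comp h a b (-a) (-b)).trans <| by
      rw [neg_add_cancel, add_neg_cancel, transvectionHom_zero]; rfl

lemma signAut_conj_transvectionAut_of_eq_one {δ : α → ℤˣ} {i j : α} (h : i ≠ j) (hj : δ j = 1)
    (a b : ℤ) : signAut δ * transvectionAut h a b * (signAut δ)⁻¹ =
      transvectionAut h (δ i * a) (δ i * b) := by
  rw [mul_inv_eq_iff_eq_mul]
  refine mulAut_freeGroup_ext fun k => ?_
  by_cases hk : k = j
  · subst hk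
    simp [_root_.map_mul, _root_.map_zpow, hj, _root_.zpow_mul]
  · simp [transvectionAut_of_ne h hk, _root_.map_zpow]

lemma signAut_conj_transvectionAut_of_eq_neg_one {δ : α → ℤˣ} {i j : α} (h : i ≠ j)
    (hj : δ j = -1) (a b : ℤ) : signAut δ * transvectionAut h a b * (signAut δ)⁻¹ =
      transvectionAut h (-(δ i * b)) (-(δ i * a)) := by
  rw [mul_inv_eq_iff_eq_mul]
  refine mulAut_freeGroup_ext fun k => ?_
  by_cases hk : k = j
  · subst hk
    simp [_root_.map_mul, _root_.map_zpow, hj, _root_.zpow_mul, mul_assoc]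
  · simp [transvectionAut_of_ne h hk, _root_.map_zpow]

end Automorphisms

section Nielsen

variable {α : Type*}

lemma exists_mk_letter_eq_zpow (l : α × Bool) :
    ∃ u : ℤˣ, FreeGroup.mk [l] = FreeGroup.of l.1 ^ (u : ℤ) := by
  obtain ⟨i, _ | _⟩ := l
  · exact ⟨-1, by simp [FreeGroup.of, FreeGroup.inv_mk, FreeGroup.invRev]⟩
  · exact ⟨1, by simp [FreeGroup.of]⟩

lemma eq_of_of_eq_zpow {k k' : α} {u : ℤˣ} (h : FreeGroup.of k = FreeGroup.of k' ^ (u : ℤ)) :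
    k = k' := by
  classical
  have hword := congrArg FreeGroup.toWord h
  rcases Int.units_eq_one_or u with rfl | rfl
  · simpa using hword
  · simp [FreeGroup.toWord_inv, FreeGroup.invRev] at hword

lemma exists_eq_permAut_mul_signAut [Finite α] (φ : MulAut (FreeGroup α))
    (h : ∀ k, ∃ l : α × Bool, φ (FreeGroup.of k) = FreeGroup.mk [l]) :
    ∃ (σ : Equiv.Perm α) (δ : α → ℤˣ), φ = permAut σ * signAut δ := by
  choose l hl using h
  choose δ hδ using fun k => exists_mk_letter_eq_zpow (l k)
  have hinj : Function.Injective fun k => (l k).1 := by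
    intro k k' (hkk' : (l k).1 = (l k').1)
    refine eq_of_of_eq_zpow (u := δ k' * δ k) (φ.injective ?_)
    rw [_root_.map_zpow, hl, hl, hδ, hδ, hkk', ← _root_.zpow_mul, Units.val_mul, ← mul_assoc,
      ← Units.val_mul, Int.units_mul_self, Units.val_one, one_mul]
  refine ⟨Equiv.ofBijective _ (Finite.injective_iff_bijective.1 hinj), δ,
    mulAut_freeGroup_ext fun k => ?_⟩
  rw [hl, hδ, MulAut.mul_apply, signAut_of, _root_.map_zpow, permAut_of, Equiv.ofBijective_apply]

variable [DecidableEq α]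

lemma exists_transvectionAut_mk_letter {P : Subgroup (MulAut (FreeGroup α))}
    (hP : ∀ (i j : α) (h : i ≠ j), transvectionAut h 0 1 ∈ P) (hδ : ∀ δ, signAut δ ∈ P)
    {a b : α × Bool} (hab : a.1 ≠ b.1) :
    ∃ ν ∈ P, ν (FreeGroup.mk [b]) = FreeGroup.mk [a] * FreeGroup.mk [b] ∧
      ∀ k ≠ b.1, ν (FreeGroup.of k) = FreeGroup.of k := by
  have hright (u : ℤˣ) : transvectionAut hab 0 u ∈ P := by
    rcases Int.units_eq_one_or u with rfl | rfl
    · exact hP _ _ hab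
    · simpa [transvectionAut_inv] using inv_mem (hP _ _ hab)
  have hleft (u : ℤˣ) : transvectionAut hab u 0 ∈ P := by
    have hconj := signAut_conj_transvectionAut_of_eq_neg_one hab
      (Pi.mulSingle_eq_same (M := fun _ => ℤˣ) b.1 (-1)) 0 ((-u : ℤˣ) : ℤ)
    rw [Pi.mulSingle_eq_of_ne hab, Units.val_one, one_mul, one_mul, neg_zero, Units.val_neg,
      neg_neg] at hconj
    exact hconj ▸ mul_mem (mul_mem (hδ _) (by simpa using hright (-u))) (inv_mem (hδ _))
  obtain ⟨u, hu⟩ := exists_mk_letter_eq_zpow a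
  obtain ⟨v, hv⟩ := exists_mk_letter_eq_zpow b
  rw [hu, hv]
  rcases Int.units_eq_one_or v with rfl | rfl
  · exact ⟨_, hleft u, by simp, fun k hk => transvectionAut_of_ne hab hk _ _⟩
  · exact ⟨_, hright (-u), by simp, fun k hk => transvectionAut_of_ne hab hk _ _⟩

lemma exists_inv_of_eq_mk_letter {φ : MulAut (FreeGroup α)}
    (hφ : IsNielsenReduced (φ : FreeGroup α →* FreeGroup α)) (k : α) :
    ∃ l : α × Bool, φ⁻¹ (FreeGroup.of k) = FreeGroup.mk [l] := by
  have hle := hφ.norm_le_norm_map (φ⁻¹ (FreeGroup.of k))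
  rw [MonoidHom.coe_coe, MulAut.apply_inv_self, FreeGroup.norm_of] at hle
  have hne : (φ⁻¹ (FreeGroup.of k)).norm ≠ 0 := by
    rw [Ne, FreeGroup.norm_eq_zero, map_eq_one_iff _ (φ⁻¹).injective]
    exact FreeGroup.of_ne_one k
  obtain ⟨l, hl⟩ := List.length_eq_one_iff.1 (le_antisymm hle (Nat.pos_of_ne_zero hne))
  exact ⟨l, by rw [← hl, FreeGroup.mk_toWord]⟩

lemma sum_weight_mul_lt [Fintype α] {φ ν : MulAut (FreeGroup α)} {a b : α × Bool}
    (hb : ν (FreeGroup.mk [b]) = FreeGroup.mk [a] * FreeGroup.mk [b])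
    (hν : ∀ k ≠ b.1, ν (FreeGroup.of k) = FreeGroup.of k)
    (hlt : weight (φ (FreeGroup.mk [a]) * φ (FreeGroup.mk [b])) < weight (φ (FreeGroup.mk [b]))) :
    ∑ k, weight ((φ * ν) (FreeGroup.of k)) < ∑ k, weight (φ (FreeGroup.of k)) := by
  have hletter (ψ : MulAut (FreeGroup α)) :
      weight (ψ (FreeGroup.of b.1)) = weight (ψ (FreeGroup.mk [b])) := by
    obtain ⟨u, hu⟩ := exists_mk_letter_eq_zpow b
    rcases Int.units_eq_one_or u with rfl | rfl <;> simp [hu, weight_inv]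
  have hb' : weight ((φ * ν) (FreeGroup.of b.1)) < weight (φ (FreeGroup.of b.1)) := by
    rwa [hletter, hletter, MulAut.mul_apply, hb, _root_.map_mul]
  refine Finset.sum_lt_sum (fun k _ => ?_) ⟨b.1, Finset.mem_univ _, hb'⟩
  by_cases hk : k = b.1
  · exact hk ▸ hb'.le
  · rw [MulAut.mul_apply, hν k hk]

theorem eq_top_of_nielsen_generators [Finite α] {P : Subgroup (MulAut (FreeGroup α))}
    (hP : ∀ (i j : α) (h : i ≠ j), transvectionAut h 0 1 ∈ P)
    (hσ : ∀ σ, permAut σ ∈ P) (hδ : ∀ δ, signAut δ ∈ P) : P = ⊤ := by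
  cases nonempty_fintype α
  refine (Subgroup.eq_top_iff' P).2 fun φ => ?_
  induction hm : ∑ k, weight (φ (FreeGroup.of k)) using Nat.strong_induction_on generalizing φ with
  | h m ih =>
    by_cases hφ : HasMinimalWeight (φ : FreeGroup α →* FreeGroup α)
    · have hne (b : α × Bool) : (φ : FreeGroup α →* FreeGroup α) (FreeGroup.mk [b]) ≠ 1 := by
        rw [MonoidHom.coe_coe, Ne, map_eq_one_iff φ φ.injective]
        exact fun h => by simpa using congrArg FreeGroup.toWord h
      obtain ⟨σ, δ, h⟩ := exists_eq_permAut_mul_signAut φ⁻¹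
        (exists_inv_of_eq_mk_letter (hφ.isNielsenReduced hne))
      exact inv_mem_iff.1 (h ▸ mul_mem (hσ σ) (hδ δ))
    · simp only [HasMinimalWeight, not_forall, not_le] at hφ
      obtain ⟨a, b, hab, hlt⟩ := hφ
      obtain ⟨ν, hν, hνb, hνk⟩ := exists_transvectionAut_mk_letter hP hδ hab
      exact (Subgroup.mul_mem_cancel_right P hν).1
        (ih _ (hm ▸ sum_weight_mul_lt hνb hνk hlt) (φ * ν) rfl)

end Nielsen

/-! ### The Steinberg relations over the field with two elements -/

section Steinberg

open scoped commutatorElement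

variable {G ι : Type*} [Group G] {E : ι → ι → G} {i j k m a b : ι} {A B S T : Set ι}

/-- The Steinberg relations over the field with two elements, for elements `E i j` in the role of
the elementary matrices; `E i i = 1` is a convention. -/
structure IsSteinberg (E : ι → ι → G) : Prop where
  diag (i : ι) : E i i = 1
  mul_self (i j : ι) : E i j * E i j = 1
  commute {i j k l : ι} : i ≠ l → j ≠ k → Commute (E i j) (E k l)
  commutator {i j k : ι} : i ≠ j → j ≠ k → i ≠ k → ⁅E i j, E j k⁆ = E i k

/-- The analogue in `G` of the permutation matrix of the transposition of `i` and `j`. -/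
def weyl (E : ι → ι → G) (i j : ι) : G := E i j * E j i * E i j

namespace IsSteinberg

lemma inv_eq (hE : IsSteinberg E) (i j : ι) : (E i j)⁻¹ = E i j :=
  inv_eq_of_mul_eq_one_left (hE.mul_self i j)

lemma transpose (hE : IsSteinberg E) : IsSteinberg fun i j => E j i where
  diag := hE.diag
  mul_self i j := hE.mul_self j i
  commute hil hjk := hE.commute hjk hil
  commutator hij hjk hik := by
    rw [← commutatorElement_inv, hE.commutator hjk.symm hij.symm hik.symm, hE.inv_eq]

lemma conj_left (hE : IsSteinberg E) (hij : i ≠ j) (hjk : j ≠ k) (hik : i ≠ k) :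
    MulAut.conj (E i j) (E j k) = E i k * E j k := by
  rw [← hE.commutator hij hjk hik, commutatorElement_def, inv_mul_cancel_right, MulAut.conj_apply]

lemma conj_eq_self (hE : IsSteinberg E) {l : ι} (hil : i ≠ l) (hjk : j ≠ k) :
    MulAut.conj (E i j) (E k l) = E k l := by
  rw [MulAut.conj_apply, (hE.commute hil hjk).eq, mul_inv_cancel_right]

lemma weyl_self (hE : IsSteinberg E) (i : ι) : weyl E i i = 1 := by
  simp only [weyl, hE.diag, mul_one]

lemma conj_weyl_left_source (hE : IsSteinberg E) (hij : i ≠ j) (hik : i ≠ k) (hjk : j ≠ k) :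
    MulAut.conj (weyl E i j) (E i k) = E j k := by
  simp only [weyl, _root_.map_mul, MulAut.mul_apply, hE.conj_eq_self hik hij.symm,
    hE.conj_left hij.symm hik hjk, hE.conj_left hij hjk hik]
  rw [(hE.commute hik hjk.symm).eq, mul_assoc, hE.mul_self, mul_one]

lemma conj_weyl_left_target (hE : IsSteinberg E) (hij : i ≠ j) (hik : i ≠ k) (hjk : j ≠ k) :
    MulAut.conj (weyl E i j) (E j k) = E i k := by
  simp only [weyl, _root_.map_mul, MulAut.mul_apply, hE.conj_left hij hjk hik,
    hE.conj_left hij.symm hik hjk, hE.conj_eq_self hik hij.symm,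
    hE.conj_eq_self hjk hij]
  rw [mul_assoc (E i k * E j k), ← mul_assoc (E i k) (E i k), hE.mul_self, one_mul, mul_assoc,
    hE.mul_self, mul_one]

lemma conj_weyl_right_source (hE : IsSteinberg E) (hij : i ≠ j) (hik : i ≠ k) (hjk : j ≠ k) :
    MulAut.conj (weyl E i j) (E k i) = E k j :=
  hE.transpose.conj_weyl_left_target hij.symm hjk hik

lemma conj_weyl_right_target (hE : IsSteinberg E) (hij : i ≠ j) (hik : i ≠ k) (hjk : j ≠ k) :
    MulAut.conj (weyl E i j) (E k j) = E k i :=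
  hE.transpose.conj_weyl_left_source hij.symm hjk hik

lemma conj_weyl_self (hE : IsSteinberg E) (hthird : ∃ k, k ≠ i ∧ k ≠ j) (hij : i ≠ j) :
    MulAut.conj (weyl E i j) (E i j) = E j i := by
  obtain ⟨k, hki, hkj⟩ := hthird
  rw [← hE.commutator hki.symm hkj hij, map_commutatorElement,
    hE.conj_weyl_left_source hij hki.symm hkj.symm, hE.conj_weyl_right_target hij hki.symm hkj.symm,
    hE.commutator hkj.symm hki hij.symm]

lemma weyl_comm (hE : IsSteinberg E) (hthird : ∃ k, k ≠ i ∧ k ≠ j) : weyl E i j = weyl E j i := by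
  by_cases hij : i = j
  · rw [hij]
  have h : weyl E i j * E i j = E j i * weyl E i j :=
    mul_inv_eq_iff_eq_mul.1 (hE.conj_weyl_self hthird hij)
  calc weyl E i j = E j i * (E j i * weyl E i j) := by rw [← mul_assoc, hE.mul_self, one_mul]
    _ = E j i * (E i j * E j i * (E i j * E i j)) := by rw [← h, weyl, mul_assoc (E i j * E j i)]
    _ = weyl E j i := by rw [hE.mul_self, mul_one, weyl, mul_assoc]

lemma weyl_inv (hE : IsSteinberg E) (i j : ι) : (weyl E i j)⁻¹ = weyl E i j := by
  simp only [weyl, _root_.mul_inv_rev, hE.inv_eq, mul_assoc]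

lemma conj_weyl [DecidableEq ι] (hE : IsSteinberg E) (hthird : ∀ i j : ι, ∃ k, k ≠ i ∧ k ≠ j)
    (i j a b : ι) :
    MulAut.conj (weyl E i j) (E a b) = E (Equiv.swap i j a) (Equiv.swap i j b) := by
  by_cases hij : i = j
  · rw [hij, hE.weyl_self, _root_.map_one, Equiv.swap_self]; rfl
  by_cases hab : a = b
  · rw [hab, hE.diag, hE.diag, _root_.map_one]
  by_cases hai : a = i
  · subst hai
    rw [Equiv.swap_apply_left]
    by_cases hbj : b = j
    · rw [hbj, Equiv.swap_apply_right, hE.conj_weyl_self (hthird a j) hij]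
    · rw [Equiv.swap_apply_of_ne_of_ne (Ne.symm hab) hbj,
        hE.conj_weyl_left_source hij hab (Ne.symm hbj)]
  by_cases haj : a = j
  · subst haj
    rw [Equiv.swap_apply_right]
    by_cases hbi : b = i
    · rw [hbi, Equiv.swap_apply_left, hE.weyl_comm (hthird i a), hE.conj_weyl_self (hthird a i) hai]
    · rw [Equiv.swap_apply_of_ne_of_ne hbi (Ne.symm hab),
        hE.conj_weyl_left_target hij (Ne.symm hbi) hab]
  rw [Equiv.swap_apply_of_ne_of_ne hai haj]
  by_cases hbi : b = i
  · rw [hbi, Equiv.swap_apply_left, hE.conj_weyl_right_source hij (Ne.symm hai) (Ne.symm haj)]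
  by_cases hbj : b = j
  · rw [hbj, Equiv.swap_apply_right, hE.conj_weyl_right_target hij (Ne.symm hai) (Ne.symm haj)]
  rw [Equiv.swap_apply_of_ne_of_ne hbi hbj]
  simp only [weyl, _root_.map_mul, MulAut.mul_apply, hE.conj_eq_self (Ne.symm hbi) (Ne.symm haj),
    hE.conj_eq_self (Ne.symm hbj) (Ne.symm hai)]

lemma conj_weyl_weyl [DecidableEq ι] (hE : IsSteinberg E)
    (hthird : ∀ i j : ι, ∃ k, k ≠ i ∧ k ≠ j) (i j a b : ι) :
    MulAut.conj (weyl E i j) (weyl E a b) = weyl E (Equiv.swap i j a) (Equiv.swap i j b) := by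
  conv_lhs => rw [weyl.eq_def E a b]
  simp only [_root_.map_mul, hE.conj_weyl hthird]
  rfl

end IsSteinberg

/-- The subgroup generated by the `E i j` with `i ∈ A` and `j ∈ B`. -/
def blockSubgroup (E : ι → ι → G) (A B : Set ι) : Subgroup G :=
  Subgroup.closure (Set.image2 E A B)

lemma mem_blockSubgroup (hi : i ∈ A) (hj : j ∈ B) : E i j ∈ blockSubgroup E A B :=
  Subgroup.subset_closure (Set.mem_image2_of_mem hi hj)

lemma blockSubgroup_transpose : blockSubgroup (fun i j => E j i) A B = blockSubgroup E B A := by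
  rw [blockSubgroup, Set.image2_swap, blockSubgroup]

lemma map_mem_of_mem_blockSubgroup {K F : Type*} [Group K] [FunLike F G K] [MonoidHomClass F G K]
    {H : Subgroup K} (f : F)
    (h : ∀ i ∈ A, ∀ j ∈ B, f (E i j) ∈ H) {g : G} (hg : g ∈ blockSubgroup E A B) : f g ∈ H := by
  suffices blockSubgroup E A B ≤ H.comap (f : G →* K) from this hg
  rw [blockSubgroup, Subgroup.closure_le]
  rintro _ ⟨i, hi, j, hj, rfl⟩
  exact h i hi j hj

/-- The dual `g ↦ (π g⁻¹)ᵀ` of a matrix representation. -/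
def contragredient {R : Type*} [CommRing R] [DecidableEq ι] [Fintype ι]
    (π : G →* Matrix ι ι R) : G →* Matrix ι ι R where
  toFun g := (π g⁻¹)ᵀ
  map_one' := by simp
  map_mul' g h := by rw [_root_.mul_inv_rev, _root_.map_mul, transpose_mul]

namespace IsSteinberg

@[elab_as_elim]
lemma blockSubgroup_induction (hE : IsSteinberg E) {p : G → Prop} (one : p 1)
    (mul : ∀ i ∈ A, ∀ j ∈ B, ∀ y ∈ blockSubgroup E A B, p y → p (E i j * y)) {g : G}
    (hg : g ∈ blockSubgroup E A B) : p g := by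
  induction hg using Subgroup.closure_induction_left with
  | one => exact one
  | mul_left _ hx y hy ih =>
    obtain ⟨i, hi, j, hj, rfl⟩ := hx
    exact mul i hi j hj y hy ih
  | inv_mul_cancel _ hx y hy ih =>
    obtain ⟨i, hi, j, hj, rfl⟩ := hx
    rw [hE.inv_eq]
    exact mul i hi j hj y hy ih

@[elab_as_elim]
lemma column_induction (hE : IsSteinberg E) {p : G → Prop} (one : p 1)
    (mul : ∀ i ∈ A, ∀ y ∈ blockSubgroup E A {m}, p y → p (E i m * y)) {u : G}
    (hu : u ∈ blockSubgroup E A {m}) : p u :=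
  hE.blockSubgroup_induction one (fun i hi _ hj => Set.mem_singleton_iff.1 hj ▸ mul i hi) hu

lemma commute_of_mem_blockSubgroup (hE : IsSteinberg E) (hi : i ∉ B) (hj : j ∉ A) {g : G}
    (hg : g ∈ blockSubgroup E A B) : Commute (E i j) g :=
  hE.blockSubgroup_induction (Commute.one_right _)
    (fun _ ha _ hb _ _ hy => (hE.commute (ne_of_mem_of_not_mem hb hi).symm
      (ne_of_mem_of_not_mem ha hj).symm).mul_right hy) hg

lemma conj_mem_column (hE : IsSteinberg E) (hm : m ∉ A) (hi : i ∈ A) {u : G}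
    (hu : u ∈ blockSubgroup E A {m}) : MulAut.conj (E i j) u ∈ blockSubgroup E A {m} := by
  refine map_mem_of_mem_blockSubgroup (MulAut.conj (E i j)) (fun a ha q hq => ?_) hu
  rw [Set.mem_singleton_iff.1 hq]
  have him := ne_of_mem_of_not_mem hi hm
  have hmem := mem_blockSubgroup (E := E) ha (Set.mem_singleton m)
  by_cases hja : j = a
  · subst hja
    by_cases hij : i = j
    · rwa [hij, hE.diag, _root_.map_one, MulAut.one_apply]
    · rw [hE.conj_left hij (ne_of_mem_of_not_mem ha hm) him]
      exact mul_mem (mem_blockSubgroup hi rfl) hmem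
  · rwa [hE.conj_eq_self him hja]

lemma column_split (hE : IsSteinberg E) (hm : m ∉ A) (him : i ≠ m) {u : G}
    (hu : u ∈ blockSubgroup E A {m}) :
    u ∈ blockSubgroup E (A \ {i}) {m} ∨ E i m * u ∈ blockSubgroup E (A \ {i}) {m} := by
  refine hE.column_induction (Or.inl (one_mem _)) (fun a ha y _ hy => ?_) hu
  by_cases hai : a = i
  · rw [hai, ← mul_assoc, hE.mul_self, one_mul]
    exact hy.symm
  · have hmem : E a m ∈ blockSubgroup E (A \ {i}) {m} := mem_blockSubgroup ⟨ha, hai⟩ rfl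
    rw [← mul_assoc, (hE.commute him (ne_of_mem_of_not_mem ha hm).symm).eq, mul_assoc]
    exact hy.imp (mul_mem hmem) (mul_mem hmem)

lemma exists_eq_row_mul_block (hE : IsSteinberg E) (hm : m ∉ S) {h : G}
    (hh : h ∈ blockSubgroup E (insert m S) S) :
    ∃ v ∈ blockSubgroup E {m} S, ∃ k ∈ blockSubgroup E S S, h = v * k := by
  refine hE.blockSubgroup_induction ⟨1, one_mem _, 1, one_mem _, (one_mul 1).symm⟩ ?_ hh
  rintro a (rfl | ha) b hb _ - ⟨v, hv, k, hk, rfl⟩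
  · exact ⟨E a b * v, mul_mem (mem_blockSubgroup rfl hb) hv, k, hk, (mul_assoc _ _ _).symm⟩
  · rw [← blockSubgroup_transpose] at hv
    have hconj := hE.transpose.conj_mem_column (j := a) hm hb hv
    rw [blockSubgroup_transpose] at hconj
    refine ⟨_, hconj, E a b * k, mul_mem (mem_blockSubgroup ha hb) hk, ?_⟩
    simp [mul_assoc]

section Orbit

variable {X : Type*} [MulAction G X] {x : ι → X}

lemma row_smul_column_smul (hE : IsSteinberg E) (hbm : b ≠ m) (hm : m ∈ T)
    (hfix : ∀ a ∈ T, E a b • x m = x m) {u : G}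
    (hu : u ∈ blockSubgroup E ((T \ {m}) \ {b}) {m}) : E m b • u • x m = u • x m := by
  refine hE.column_induction (by rw [one_smul, hfix m hm]) ?_ hu
  rintro c ⟨⟨hcT, hcm⟩, hcb⟩ y hy ih
  have hcomm : E c b * y = y * E c b := hE.commute_of_mem_blockSubgroup hcm (fun h => h.2 rfl) hy
  have hconj : E m b * E c m = E c m * E c b * E m b := by
    rw [mul_assoc, ← hE.conj_left hcm (Ne.symm hbm) hcb, MulAut.conj_apply, hE.inv_eq, ← mul_assoc,
      ← mul_assoc, hE.mul_self, one_mul]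
  calc E m b • (E c m * y) • x m = E c m • E c b • E m b • y • x m := by
        simp only [← mul_smul, ← mul_assoc, hconj]
    _ = E c m • (E c b * y) • x m := by rw [ih, mul_smul (E c b)]
    _ = (E c m * y) • x m := by rw [hcomm, mul_smul y, hfix c hcT, mul_smul]

lemma conj_weyl_mem_column (hE : IsSteinberg E) (hthird : ∀ i j : ι, ∃ k, k ≠ i ∧ k ≠ j)
    {u : G} (hu : u ∈ blockSubgroup E ((T \ {m}) \ {b}) {m}) :
    MulAut.conj (weyl E m b) u ∈ blockSubgroup E (T \ {b}) {b} := by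
  classical
  refine map_mem_of_mem_blockSubgroup (MulAut.conj (weyl E m b)) ?_ hu
  rintro c ⟨⟨hcT, hcm⟩, hcb⟩ q hq
  rw [Set.mem_singleton_iff.1 hq, hE.conj_weyl hthird, Equiv.swap_apply_left,
    Equiv.swap_apply_of_ne_of_ne hcm hcb]
  exact mem_blockSubgroup ⟨hcT, hcb⟩ rfl

lemma row_smul_column_smul_mem (hE : IsSteinberg E) (hthird : ∀ i j : ι, ∃ k, k ≠ i ∧ k ≠ j)
    (hfix : ∀ a ∈ T, ∀ b ∈ T, ∀ i ∈ T, b ≠ i → E a b • x i = x i)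
    (hweyl : ∀ i ∈ T, ∀ j ∈ T, weyl E i j • x i = x j) (hm : m ∈ T) (hb : b ∈ T) (hbm : b ≠ m)
    {u : G} (hu : u ∈ blockSubgroup E (T \ {m}) {m}) :
    ∃ i ∈ T, ∃ v ∈ blockSubgroup E (T \ {i}) {i}, E m b • u • x m = v • x i := by
  rcases hE.column_split (fun h => h.2 rfl) hbm hu with h | h
  · exact ⟨m, hm, u, hu, hE.row_smul_column_smul hbm hm (fun a ha => hfix a ha b hb m hm hbm) h⟩
  refine ⟨b, hb, _, hE.conj_weyl_mem_column hthird h, ?_⟩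
  have hrow := hE.row_smul_column_smul hbm hm (fun a ha => hfix a ha b hb m hm hbm) h
  calc E m b • u • x m = E m b • E b m • (E b m * u) • x m := by
        rw [← mul_smul (E b m), ← mul_assoc, hE.mul_self, one_mul]
    _ = weyl E m b • (E b m * u) • x m := by
        conv_lhs => rw [← hrow]
        simp only [weyl, mul_smul]
    _ = MulAut.conj (weyl E m b) (E b m * u) • x b := by
        rw [MulAut.conj_apply, ← hweyl m hm b hb, ← mul_smul, ← mul_smul, inv_mul_cancel_right]

theorem exists_smul_eq_column_smul (hE : IsSteinberg E) (hthird : ∀ i j : ι, ∃ k, k ≠ i ∧ k ≠ j)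
    (hfix : ∀ a ∈ T, ∀ b ∈ T, ∀ i ∈ T, b ≠ i → E a b • x i = x i)
    (hweyl : ∀ i ∈ T, ∀ j ∈ T, weyl E i j • x i = x j) (hm : m ∈ T) {g : G}
    (hg : g ∈ blockSubgroup E T T) :
    ∃ i ∈ T, ∃ u ∈ blockSubgroup E (T \ {i}) {i}, g • x m = u • x i := by
  refine hE.blockSubgroup_induction ⟨m, hm, 1, one_mem _, rfl⟩ ?_ hg
  rintro a ha b hb y - ⟨i, hi, u, hu, h⟩
  rw [mul_smul, h]
  by_cases hab : a = b
  · exact ⟨i, hi, u, hu, by rw [hab, hE.diag, one_smul]⟩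
  by_cases hbi : b = i
  · subst hbi
    have hmem : E a b ∈ blockSubgroup E (T \ {b}) {b} := mem_blockSubgroup ⟨ha, hab⟩ rfl
    exact ⟨b, hb, E a b * u, mul_mem hmem hu, (mul_smul _ _ _).symm⟩
  by_cases hai : a = i
  · exact hai ▸ hE.row_smul_column_smul_mem hthird hfix hweyl hi hb hbi hu
  · have hmem := hE.conj_mem_column (A := T \ {i}) (j := b) (fun h => h.2 rfl) ⟨ha, hai⟩ hu
    refine ⟨i, hi, _, hmem, ?_⟩
    nth_rewrite 2 [← hfix a ha b hb i hi hbi]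
    rw [← mul_smul, ← mul_smul, MulAut.conj_apply, inv_mul_cancel_right]

end Orbit

lemma mul_weyl_coset (hE : IsSteinberg E) (hthird : ∀ i j : ι, ∃ k, k ≠ i ∧ k ≠ j)
    (hm : m ∈ T) (ha : a ∈ T) (hb : b ∈ T) (hi : i ∈ T) (hbi : b ≠ i) :
    ((E a b * weyl E i m : G) : G ⧸ blockSubgroup E T (T \ {m})) = (weyl E i m : G) := by
  classical
  have hswap {c : ι} (hc : c ∈ T) : Equiv.swap i m c ∈ T := by
    rw [Equiv.swap_apply_def]
    split_ifs <;> assumption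
  have hne : Equiv.swap i m b ≠ m := by
    rwa [Ne, Equiv.swap_apply_eq_iff, Equiv.swap_apply_right]
  refine (QuotientGroup.eq.2 ?_).symm
  rw [← mul_assoc]
  nth_rewrite 2 [← inv_inv (weyl E i m)]
  rw [← MulAut.conj_apply, hE.weyl_inv, hE.conj_weyl hthird]
  exact mem_blockSubgroup (hswap ha) ⟨hswap hb, hne⟩

lemma weyl_mul_weyl_coset (hE : IsSteinberg E) (hthird : ∀ i j : ι, ∃ k, k ≠ i ∧ k ≠ j)
    (hi : i ∈ T) (hj : j ∈ T) :
    ((weyl E i j * weyl E i m : G) : G ⧸ blockSubgroup E T (T \ {m})) = (weyl E j m : G) := by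
  classical
  by_cases him : i = m
  · rw [him, hE.weyl_self, mul_one, hE.weyl_comm (hthird m j)]
  by_cases hjm : j = m
  · rw [hjm, hE.weyl_self, mul_eq_one_iff_eq_inv.2 (hE.weyl_inv i m).symm]
  have hmem : weyl E i j ∈ blockSubgroup E T (T \ {m}) :=
    mul_mem (mul_mem (mem_blockSubgroup hi ⟨hj, hjm⟩) (mem_blockSubgroup hj ⟨hi, him⟩))
      (mem_blockSubgroup hi ⟨hj, hjm⟩)
  have hconj := hE.conj_weyl_weyl hthird i j i m
  rw [MulAut.conj_apply, mul_inv_eq_iff_eq_mul, Equiv.swap_apply_left,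
    Equiv.swap_apply_of_ne_of_ne (Ne.symm him) (Ne.symm hjm)] at hconj
  rw [hconj, QuotientGroup.mk_mul_of_mem _ hmem]

lemma exists_inv_mul_column_mul_weyl_mem (hE : IsSteinberg E)
    (hthird : ∀ i j : ι, ∃ k, k ≠ i ∧ k ≠ j) (hm : m ∈ T) {g : G} (hg : g ∈ blockSubgroup E T T) :
    ∃ i ∈ T, ∃ u ∈ blockSubgroup E (T \ {i}) {i},
      g⁻¹ * (u * weyl E i m) ∈ blockSubgroup E T (T \ {m}) := by
  obtain ⟨i, hi, u, hu, h⟩ := hE.exists_smul_eq_column_smul hthird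
    (x := fun i => ((weyl E i m : G) : G ⧸ blockSubgroup E T (T \ {m})))
    (fun a ha b hb i hi hbi => hE.mul_weyl_coset hthird hm ha hb hi hbi)
    (fun i hi j hj => hE.weyl_mul_weyl_coset hthird hi hj) hm hg
  rw [hE.weyl_self] at h
  exact ⟨i, hi, u, hu, by simpa using QuotientGroup.eq.1 h⟩

section Faithful

variable [DecidableEq ι] [Fintype ι] {π : G →* Matrix ι ι (ZMod 2)}

lemma map_apply_of_row_notMem (hE : IsSteinberg E)
    (hπ : ∀ i j, i ≠ j → π (E i j) = transvection i j 1) (ha : a ∉ A) (c : ι) {g : G}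
    (hg : g ∈ blockSubgroup E A B) : π g a c = (1 : Matrix ι ι (ZMod 2)) a c := by
  refine hE.blockSubgroup_induction (by rw [_root_.map_one]) (fun i hi j _ y _ hy => ?_) hg
  by_cases hij : i = j
  · rwa [hij, hE.diag, one_mul]
  · rw [_root_.map_mul, hπ i j hij,
      transvection_mul_apply_of_ne _ _ _ _ (ne_of_mem_of_not_mem hi ha).symm, hy]

lemma map_apply_of_column_notMem (hE : IsSteinberg E)
    (hπ : ∀ i j, i ≠ j → π (E i j) = transvection i j 1) (hb : b ∉ B) (a : ι) {g : G}
    (hg : g ∈ blockSubgroup E A B) : π g a b = (1 : Matrix ι ι (ZMod 2)) a b := by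
  refine hE.blockSubgroup_induction (p := fun g => ∀ a, π g a b = (1 : Matrix ι ι (ZMod 2)) a b)
    (fun a => by rw [_root_.map_one]) (fun i _ j hj y _ hy a => ?_) hg a
  by_cases hij : i = j
  · rw [hij, hE.diag, one_mul, hy]
  rw [_root_.map_mul, hπ i j hij]
  by_cases hai : a = i
  · rw [hai, transvection_mul_apply_same, hy, hy, one_apply_ne (ne_of_mem_of_not_mem hj hb),
      mul_zero, add_zero]
  · rw [transvection_mul_apply_of_ne _ _ _ _ hai, hy]

lemma map_mul_weyl_apply (hE : IsSteinberg E)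
    (hπ : ∀ i j, i ≠ j → π (E i j) = transvection i j 1) (g : G) (a i m : ι) :
    π (g * weyl E i m) a m = π g a i := by
  by_cases him : i = m
  · rw [him, hE.weyl_self, mul_one]
  simp only [weyl, _root_.map_mul, hπ i m him, hπ m i (Ne.symm him), ← mul_assoc,
    mul_transvection_apply_same, mul_transvection_apply_of_ne _ _ _ _ him,
    mul_transvection_apply_of_ne _ _ _ _ (Ne.symm him), one_mul]
  linear_combination (π g a m + π g a i) * (CharTwo.two_eq_zero : (2 : ZMod 2) = 0)

lemma column_eq_one (hE : IsSteinberg E)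
    (hπ : ∀ i j, i ≠ j → π (E i j) = transvection i j 1) (hm : m ∉ A) {u : G}
    (hu : u ∈ blockSubgroup E A {m}) (h : ∀ a ∈ A, π u a m = 0) : u = 1 := by
  induction A, A.toFinite using Set.Finite.induction_on generalizing u with
  | empty => simpa [blockSubgroup] using hu
  | @insert i A hi _ ih =>
    have him : i ≠ m := fun h => hm (h ▸ Set.mem_insert i A)
    have hmA : m ∉ A := fun h => hm (Set.mem_insert_of_mem i h)
    have hsplit := hE.column_split hm him hu
    rw [Set.insert_sdiff_self_of_notMem hi] at hsplit
    rcases hsplit with hu' | hu'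
    · exact ih hmA hu' fun a ha => h a (Set.mem_insert_of_mem i ha)
    · have h₁ := hE.map_apply_of_row_notMem hπ hi m hu'
      have h₂ := hE.map_apply_of_row_notMem hπ hmA m hu'
      rw [_root_.map_mul, hπ i m him, transvection_mul_apply_same, h i (Set.mem_insert i A),
        one_apply_ne him] at h₁
      rw [_root_.map_mul, hπ i m him, transvection_mul_apply_of_ne _ _ _ _ (Ne.symm him),
        one_apply_eq] at h₂
      simp [h₂] at h₁

lemma eq_one_of_mem_column_coset (hE : IsSteinberg E) (hthird : ∀ i j : ι, ∃ k, k ≠ i ∧ k ≠ j)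
    (hπ : ∀ i j, i ≠ j → π (E i j) = transvection i j 1) (hm : m ∈ T) {g : G}
    (hg : g ∈ blockSubgroup E T T) (hg1 : π g = 1) : g ∈ blockSubgroup E T (T \ {m}) := by
  obtain ⟨i, -, u, hu, hmem⟩ := hE.exists_inv_mul_column_mul_weyl_mem hthird hm hg
  have hcol (a : ι) : π u a i = (1 : Matrix ι ι (ZMod 2)) a m := by
    rw [← hE.map_apply_of_column_notMem hπ (fun h => h.2 rfl) a hmem, ← hE.map_mul_weyl_apply hπ,
      ← one_mul (π (g⁻¹ * _)), ← hg1, ← _root_.map_mul, mul_inv_cancel_left]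
  have him : i = m := by
    by_contra him
    have h := hE.map_apply_of_row_notMem hπ (fun h => h.2 rfl) i hu
    rw [hcol, one_apply_ne him, one_apply_eq] at h
    exact zero_ne_one h
  subst him
  have hu1 : u = 1 := hE.column_eq_one hπ (fun h => h.2 rfl) hu fun a ha => by
    rw [hcol, one_apply_ne ha.2]
  rwa [hu1, one_mul, hE.weyl_self, mul_one, inv_mem_iff] at hmem

lemma eq_one_of_mem_row_mul_block (hE : IsSteinberg E)
    (hπ : ∀ i j, i ≠ j → π (E i j) = transvection i j 1) (hm : m ∉ S) {v k : G}
    (hv : v ∈ blockSubgroup E {m} S) (hk : k ∈ blockSubgroup E S S) (hvk : π (v * k) = 1) :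
    v = 1 := by
  have hπ' (i j : ι) (hij : i ≠ j) : contragredient π (E j i) = transvection i j 1 := by
    change (π (E j i)⁻¹)ᵀ = _
    rw [hE.inv_eq, hπ j i (Ne.symm hij)]
    simp [transvection]
  rw [← blockSubgroup_transpose] at hv
  refine hE.transpose.column_eq_one hπ' hm hv fun a ha => ?_
  have hvk' : π v⁻¹ = π k := by
    rw [← mul_one (π v⁻¹), ← hvk, ← _root_.map_mul, inv_mul_cancel_left]
  change π v⁻¹ m a = 0
  rw [hvk', hE.map_apply_of_row_notMem hπ hm a hk, one_apply_ne (ne_of_mem_of_not_mem ha hm).symm]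

theorem eq_one_of_map_eq_one (hE : IsSteinberg E) (hthird : ∀ i j : ι, ∃ k, k ≠ i ∧ k ≠ j)
    (hπ : ∀ i j, i ≠ j → π (E i j) = transvection i j 1) {g : G}
    (hg : g ∈ blockSubgroup E T T) (hg1 : π g = 1) : g = 1 := by
  induction T, T.toFinite using Set.Finite.induction_on generalizing g with
  | empty => simpa [blockSubgroup] using hg
  | @insert m S hm _ ih =>
    have hgH := hE.eq_one_of_mem_column_coset hthird hπ (Set.mem_insert m S) hg hg1
    rw [Set.insert_sdiff_self_of_notMem hm] at hgH
    obtain ⟨v, hv, k, hk, rfl⟩ := hE.exists_eq_row_mul_block hm hgH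
    have hv1 : v = 1 := hE.eq_one_of_mem_row_mul_block hπ hm hv hk hg1
    rw [hv1, one_mul] at hg1 ⊢
    exact ih hk hg1

end Faithful

end IsSteinberg

end Steinberg

/-! ### Quotients by partial inversions -/

section Relations

open scoped commutatorElement

variable {α : Type*} [DecidableEq α] {i j k l : α}

lemma permAut_conj_signAut {α : Type*} (σ : Equiv.Perm α) (δ : α → ℤˣ) :
    permAut σ * signAut δ * (permAut σ)⁻¹ = signAut (δ ∘ σ.symm) := by
  rw [mul_inv_eq_iff_eq_mul]
  exact mulAut_freeGroup_ext fun k => by simp [_root_.map_zpow]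

lemma commute_transvectionAut (hij : i ≠ j) (hkl : k ≠ l) (hil : i ≠ l) (hjk : j ≠ k) (hjl : j ≠ l)
    (a b c d : ℤ) : Commute (transvectionAut hij a b) (transvectionAut hkl c d) := by
  refine mulAut_freeGroup_ext fun m => ?_
  by_cases hmj : m = j
  · subst hmj
    simp [_root_.map_mul, _root_.map_zpow, transvectionAut_of_ne hkl hjl,
      transvectionAut_of_ne hkl hil]
  by_cases hml : m = l
  · subst hml
    simp [_root_.map_mul, _root_.map_zpow, transvectionAut_of_ne hij hmj,
      transvectionAut_of_ne hij hjk.symm]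
  · simp [transvectionAut_of_ne hij hmj, transvectionAut_of_ne hkl hml]

lemma commute_transvectionAut_left_right (hij : i ≠ j) (hkj : k ≠ j) (a b : ℤ) :
    Commute (transvectionAut hij a 0) (transvectionAut hkj 0 b) := by
  refine mulAut_freeGroup_ext fun m => ?_
  by_cases hmj : m = j
  · subst hmj
    simp [_root_.map_mul, _root_.map_zpow, transvectionAut_of_ne hij hkj,
      transvectionAut_of_ne hkj hij, mul_assoc]
  · simp [transvectionAut_of_ne hij hmj, transvectionAut_of_ne hkj hmj]

lemma commutatorElement_transvectionAut (hij : i ≠ j) (hjk : j ≠ k) (hik : i ≠ k) :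
    ⁅(transvectionAut hjk 0 1)⁻¹, transvectionAut hij 0 1⁆ = transvectionAut hik 0 1 := by
  rw [commutatorElement_def, inv_inv, mul_inv_eq_iff_eq_mul, mul_assoc, inv_mul_eq_iff_eq_mul]
  refine mulAut_freeGroup_ext fun m => ?_
  by_cases hmj : m = j
  · subst hmj
    simp [_root_.map_mul, transvectionAut_of_ne hjk hjk, transvectionAut_of_ne hjk hik,
      transvectionAut_of_ne hik hjk, transvectionAut_of_ne hik hik]
  by_cases hmk : m = k
  · subst hmk
    simp [_root_.map_mul, transvectionAut_of_ne hij hmj, transvectionAut_of_ne hjk hik,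
      mul_assoc]
  · simp [transvectionAut_of_ne hij hmj, transvectionAut_of_ne hjk hmk,
      transvectionAut_of_ne hik hmk]

lemma permAut_swap (hij : i ≠ j) : permAut (Equiv.swap i j) =
    transvectionAut hij 1 0 * transvectionAut hij.symm (-1) 0 * transvectionAut hij 0 1 *
      signAut (Pi.mulSingle i (-1)) := by
  refine mulAut_freeGroup_ext fun m => ?_
  by_cases hmi : m = i
  · subst hmi
    simp [_root_.map_mul, _root_.map_inv, transvectionAut_of_ne hij hij]
  by_cases hmj : m = j
  · subst hmj
    simp [_root_.map_mul, _root_.map_inv, transvectionAut_of_ne hij hij,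
      transvectionAut_of_ne hij.symm hmi, Pi.mulSingle_eq_of_ne hmi]
  · simp [transvectionAut_of_ne hij hmj, transvectionAut_of_ne hij.symm hmi,
      Pi.mulSingle_eq_of_ne hmi, Equiv.swap_apply_of_ne_of_ne hmi hmj]

end Relations

section PartialInversion

variable {α Q : Type*} [Group Q] {q : MulAut (FreeGroup α) →* Q}

/-- A homomorphism kills a partial inversion if its kernel contains some automorphism
`x_k ↦ x_k ^ ε k` whose signs take both values. -/
def KillsPartialInversion (q : MulAut (FreeGroup α) →* Q) : Prop :=
  ∃ ε : α → ℤˣ, (∃ i, ε i = -1) ∧ (∃ i, ε i = 1) ∧ q (signAut ε) = 1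

lemma map_signAut_comp_perm {δ : α → ℤˣ} (hδ : q (signAut δ) = 1) (σ : Equiv.Perm α) :
    q (signAut (δ ∘ σ)) = 1 := by
  rw [← Equiv.symm_symm σ, ← permAut_conj_signAut, _root_.map_mul, _root_.map_mul, hδ, mul_one,
    ← _root_.map_mul, mul_inv_cancel, _root_.map_one]

lemma KillsPartialInversion.exists_signAut (hq : KillsPartialInversion q) {i j : α} (hij : i ≠ j) :
    ∃ δ : α → ℤˣ, δ i = -1 ∧ δ j = 1 ∧ q (signAut δ) = 1 := by
  obtain ⟨ε, ⟨r, hr⟩, ⟨p, hp⟩, hε⟩ := hq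
  have hrp : r ≠ p := by
    rintro rfl
    rw [hr] at hp
    exact absurd hp (by decide)
  obtain ⟨σ, hi, hj⟩ := MulAction.is_two_pretransitive_iff.1
    (Equiv.Perm.isMultiplyPretransitive α 2) hij hrp
  exact ⟨ε ∘ σ, (congrArg ε hi).trans hr, (congrArg ε hj).trans hp, map_signAut_comp_perm hε σ⟩

variable [DecidableEq α]

/-- The images of the transvections `x_j ↦ x_j * x_i`, extended by `1` on the diagonal. -/
def transvectionImage (q : MulAut (FreeGroup α) →* Q) (i j : α) : Q :=
  if h : i ≠ j then q (transvectionAut h 0 1) else 1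

lemma transvectionImage_of_ne (q : MulAut (FreeGroup α) →* Q) {i j : α} (h : i ≠ j) :
    transvectionImage q i j = q (transvectionAut h 0 1) :=
  dif_pos h

namespace KillsPartialInversion

variable {i j : α}

lemma map_transvectionAut_neg (hq : KillsPartialInversion q) (hij : i ≠ j) (a b : ℤ) :
    q (transvectionAut hij (-a) (-b)) = q (transvectionAut hij a b) := by
  obtain ⟨δ, hi, hj, hδ⟩ := hq.exists_signAut hij
  have hconj := congrArg q (signAut_conj_transvectionAut_of_eq_one hij hj a b)
  simpa [hi, hδ] using hconj.symm

lemma map_transvectionAut_swap (hq : KillsPartialInversion q) (hij : i ≠ j) (a b : ℤ) :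
    q (transvectionAut hij b a) = q (transvectionAut hij a b) := by
  obtain ⟨δ, hj, hi, hδ⟩ := hq.exists_signAut hij.symm
  have hconj := congrArg q (signAut_conj_transvectionAut_of_eq_neg_one hij hj a b)
  rw [← hq.map_transvectionAut_neg]
  simpa [hi, hδ] using hconj.symm

lemma transvectionImage_eq_left (hq : KillsPartialInversion q) (hij : i ≠ j) :
    transvectionImage q i j = q (transvectionAut hij 1 0) := by
  rw [transvectionImage_of_ne q hij, hq.map_transvectionAut_swap]

lemma commute_transvectionImage (hq : KillsPartialInversion q) {k l : α} (hil : i ≠ l)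
    (hjk : j ≠ k) : Commute (transvectionImage q i j) (transvectionImage q k l) := by
  by_cases hij : i = j
  · simp [transvectionImage, hij]
  by_cases hkl : k = l
  · simp [transvectionImage, hkl]
  rw [transvectionImage_of_ne q hkl]
  by_cases hjl : j = l
  · subst hjl
    rw [hq.transvectionImage_eq_left hij]
    exact (commute_transvectionAut_left_right hij hkl 1 1).map q
  · rw [transvectionImage_of_ne q hij]
    exact (commute_transvectionAut hij hkl hil hjk hjl 0 1 0 1).map q

theorem isSteinberg (hq : KillsPartialInversion q) : IsSteinberg (transvectionImage q) := by
  have mul_self (i j : α) : transvectionImage q i j * transvectionImage q i j = 1 := by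
    by_cases hij : i = j
    · simp [transvectionImage, hij]
    rw [transvectionImage_of_ne q hij]
    nth_rewrite 1 [← hq.map_transvectionAut_neg]
    rw [← transvectionAut_inv, _root_.map_inv, inv_mul_cancel]
  have inv_eq (i j : α) : (transvectionImage q i j)⁻¹ = transvectionImage q i j :=
    inv_eq_of_mul_eq_one_left (mul_self i j)
  refine ⟨fun i => dif_neg (not_not.2 rfl), mul_self, hq.commute_transvectionImage,
    fun {i j k} hij hjk hik => ?_⟩
  rw [← commutatorElement_inv, inv_eq_iff_eq_inv, inv_eq, ← inv_eq j k,
    transvectionImage_of_ne q hij, transvectionImage_of_ne q hjk, transvectionImage_of_ne q hik,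
    ← commutatorElement_transvectionAut hij hjk hik, map_commutatorElement, _root_.map_inv]

lemma map_signAut_mulSingle (hq : KillsPartialInversion q) (i j : α) (u : ℤˣ) :
    q (signAut (Pi.mulSingle i u)) = q (signAut (Pi.mulSingle j u)) := by
  by_cases hij : i = j
  · rw [hij]
  rcases Int.units_eq_one_or u with rfl | rfl
  · simp only [Pi.mulSingle_one]
  obtain ⟨δ, hi, hj, hδ⟩ := hq.exists_signAut hij
  have hswap : δ * (δ ∘ Equiv.swap i j) * Pi.mulSingle j (-1) = Pi.mulSingle i (-1) := by
    ext k
    by_cases hki : k = i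
    · subst hki
      simp [hi, hj, Pi.mulSingle_eq_of_ne hij]
    by_cases hkj : k = j
    · subst hkj
      simp [hi, hj, Pi.mulSingle_eq_of_ne hki]
    · simp [Pi.mulSingle_eq_of_ne hki, Pi.mulSingle_eq_of_ne hkj,
        Equiv.swap_apply_of_ne_of_ne hki hkj]
  rw [← hswap, _root_.map_mul, _root_.map_mul, _root_.map_mul, _root_.map_mul, hδ,
    map_signAut_comp_perm hδ, one_mul, one_mul]

lemma map_signAut [Fintype α] (hq : KillsPartialInversion q) (k : α) (δ : α → ℤˣ) :
    q (signAut δ) = q (signAut (Pi.mulSingle k (∏ i, δ i))) := by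
  let prodHom : (α → ℤˣ) →* ℤˣ :=
    { toFun := fun δ => ∏ i, δ i
      map_one' := Finset.prod_const_one
      map_mul' := fun _ _ => Finset.prod_mul_distrib }
  have hcomp : q.comp signAut =
      (q.comp signAut).comp ((MonoidHom.mulSingle (fun _ => ℤˣ) k).comp prodHom) := by
    refine MonoidHom.pi_ext fun i u => ?_
    have hprod : prodHom (Pi.mulSingle i u) = u := Fintype.prod_pi_mulSingle' i u
    simp only [MonoidHom.comp_apply, hprod]
    exact hq.map_signAut_mulSingle i k u
  exact DFunLike.congr_fun hcomp δ

lemma map_signAut_eq_of_prod_eq {β : Type*} [Fintype β] {q : MulAut (FreeGroup β) →* Q}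
    (hq : KillsPartialInversion q) {δ η : β → ℤˣ} (h : ∏ i, δ i = ∏ i, η i) :
    q (signAut δ) = q (signAut η) := by
  classical
  have ⟨_, ⟨k, _⟩, _⟩ := hq
  rw [hq.map_signAut k, h, ← hq.map_signAut k]

lemma commute_transvectionImage_signAut [Finite α] (hq : KillsPartialInversion q)
    (hthird : ∀ i j : α, ∃ k, k ≠ i ∧ k ≠ j) (i j : α) (δ : α → ℤˣ) :
    Commute (transvectionImage q i j) (q (signAut δ)) := by
  cases nonempty_fintype α
  by_cases hij : i = j
  · simp [transvectionImage, hij]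
  obtain ⟨k, hki, hkj⟩ := hthird i j
  rw [transvectionImage_of_ne q hij, hq.map_signAut k]
  refine Commute.map (Commute.symm ?_) q
  have hconj := signAut_conj_transvectionAut_of_eq_one hij
    (Pi.mulSingle_eq_of_ne (M := fun _ => ℤˣ) hkj.symm (∏ l, δ l)) 0 1
  rw [Pi.mulSingle_eq_of_ne hki.symm, Units.val_one, one_mul, one_mul] at hconj
  exact mul_inv_eq_iff_eq_mul.1 hconj

lemma map_mem_sup [Finite α] (hq : KillsPartialInversion q) (φ : MulAut (FreeGroup α)) :
    q φ ∈ blockSubgroup (transvectionImage q) Set.univ Set.univ ⊔ (q.comp signAut).range := by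
  set P := blockSubgroup (transvectionImage q) Set.univ Set.univ ⊔ (q.comp signAut).range
  have hE (i j : α) : transvectionImage q i j ∈ P :=
    le_sup_left (a := blockSubgroup _ _ _) (mem_blockSubgroup (Set.mem_univ i) (Set.mem_univ j))
  have hδ (δ : α → ℤˣ) : q (signAut δ) ∈ P :=
    le_sup_right (b := (q.comp signAut).range) ⟨δ, rfl⟩
  have hright (i j : α) (h : i ≠ j) : q (transvectionAut h 0 1) ∈ P :=
    transvectionImage_of_ne q h ▸ hE i j
  have hleft (i j : α) (h : i ≠ j) : q (transvectionAut h 1 0) ∈ P :=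
    hq.transvectionImage_eq_left h ▸ hE i j
  have hleft_neg (i j : α) (h : i ≠ j) : q (transvectionAut h (-1) 0) ∈ P := by
    have hneg := hq.map_transvectionAut_neg h 1 0
    exact hneg ▸ hleft i j h
  have hσ (σ : Equiv.Perm α) : q (permAut σ) ∈ P := by
    induction σ using Equiv.Perm.swap_induction_on with
    | one => simp
    | swap_mul σ i j hij ih =>
      rw [_root_.map_mul, _root_.map_mul, permAut_swap hij]
      simp only [_root_.map_mul]
      exact mul_mem (mul_mem (mul_mem (mul_mem (hleft i j hij) (hleft_neg j i hij.symm))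
        (hright i j hij)) (hδ _)) ih
  have htop : P.comap q = ⊤ := eq_top_of_nielsen_generators hright hσ hδ
  exact (Subgroup.eq_top_iff' _).1 htop φ

lemma exists_map_eq_mul_signAut [Finite α] (hq : KillsPartialInversion q)
    (hthird : ∀ i j : α, ∃ k, k ≠ i ∧ k ≠ j) (φ : MulAut (FreeGroup α)) :
    ∃ e ∈ blockSubgroup (transvectionImage q) Set.univ Set.univ, ∃ δ : α → ℤˣ,
      q φ = e * q (signAut δ) := by
  have hcomm (e : blockSubgroup (transvectionImage q) Set.univ Set.univ) (δ : α → ℤˣ) :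
      Commute (Subgroup.subtype _ e) ((q.comp signAut) δ) :=
    hq.isSteinberg.blockSubgroup_induction (p := fun e => Commute e _) (Commute.one_left _)
      (fun i _ j _ _ _ hy =>
        (hq.commute_transvectionImage_signAut hthird i j δ).mul_left hy) e.2
  have hmem := hq.map_mem_sup φ
  rw [← Subgroup.range_subtype (blockSubgroup _ _ _),
    ← MonoidHom.noncommCoprod_range _ _ hcomm] at hmem
  obtain ⟨⟨e, δ⟩, h⟩ := hmem
  exact ⟨e, e.2, δ, h.symm⟩

end KillsPartialInversion

end PartialInversion

section Reduction

variable {n : ℕ}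

lemma coe_redGL_ρ (ℓ : ℕ) (φ : FrAut n) : (redGL n ℓ (ρ n φ) : Matrix (Fin n) (Fin n) (ZMod ℓ)) =
    (mat φ).map (Int.castRingHom (ZMod ℓ)) :=
  rfl

lemma mat_transvectionAut {i j : Fin n} (h : i ≠ j) :
    mat (transvectionAut h 0 1) = transvection i j 1 := by
  ext a b
  by_cases hb : b = j
  · subst hb
    simp [mat, expSum, transvection, one_apply, single_apply, eq_comm]
  · simp [mat, expSum, transvection, one_apply, transvectionAut_of_ne h hb, Ne.symm hb, eq_comm]

lemma mat_signAut (δ : Fin n → ℤˣ) : mat (signAut δ) = diagonal fun i => (δ i : ℤ) := by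
  ext a b
  by_cases hab : a = b
  · simp [mat, expSum, hab]
  · simp [mat, expSum, hab, Ne.symm hab]

lemma detρ_signAut (δ : Fin n → ℤˣ) : detρ n (signAut δ) = ∏ i, δ i := by
  ext
  change (mat (signAut δ)).det = _
  rw [mat_signAut, det_diagonal, Units.coe_prod]

lemma redGL_ρ_signAut (δ : Fin n → ℤˣ) : redGL n 2 (ρ n (signAut δ)) = 1 := by
  have hcast (u : ℤˣ) : ((u : ℤ) : ZMod 2) = 1 := by
    rcases Int.units_eq_one_or u with rfl | rfl
    · simp
    · decide
  refine Units.ext ?_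
  rw [coe_redGL_ρ, mat_signAut, diagonal_map (_root_.map_zero _)]
  simp [hcast]

lemma coe_redGL_ρ_transvectionAut (ℓ : ℕ) {i j : Fin n} (h : i ≠ j) :
    (redGL n ℓ (ρ n (transvectionAut h 0 1)) : Matrix (Fin n) (Fin n) (ZMod ℓ)) =
      transvection i j 1 := by
  rw [coe_redGL_ρ, mat_transvectionAut, transvection, transvection,
    Matrix.map_add _ (_root_.map_add _), map_single,
    Matrix.map_one _ (_root_.map_zero _) (_root_.map_one _), _root_.map_one]

lemma KillsPartialInversion.exists_map_eq_map_signAut (hn : 3 ≤ n) {Q : Type*} [Group Q]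
    {q : FrAut n →* Q} (hq : KillsPartialInversion q) {π : Q →* GL (Fin n) (ZMod 2)}
    (hπ : π.comp q = (redGL n 2).comp (ρ n)) {φ : FrAut n} (hφ : ρ n φ ∈ GGamma n 2) :
    ∃ δ : Fin n → ℤˣ, q φ = q (signAut δ) := by
  have hthird (i j : Fin n) : ∃ k, k ≠ i ∧ k ≠ j := Fin.exists_ne_and_ne_of_two_lt i j hn
  have hπq (ψ : FrAut n) : π (q ψ) = redGL n 2 (ρ n ψ) := DFunLike.congr_fun hπ ψ
  obtain ⟨e, he, δ, h⟩ := hq.exists_map_eq_mul_signAut hthird φ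
  have hπe : π e = 1 := by
    have hred : redGL n 2 (ρ n φ) = 1 := hφ
    rw [← hred, ← hπq φ, h, _root_.map_mul, hπq, redGL_ρ_signAut, mul_one]
  have he1 : e = 1 := hq.isSteinberg.eq_one_of_map_eq_one
    (π := (Units.coeHom (Matrix (Fin n) (Fin n) (ZMod 2))).comp π) hthird
    (fun i j hij => by
      rw [transvectionImage_of_ne q hij, ← coe_redGL_ρ_transvectionAut 2 hij, ← hπq]; rfl)
    he (congrArg Units.val hπe)
  exact ⟨δ, by rw [h, he1, one_mul]⟩

theorem normalClosure_signAut (hn : 3 ≤ n) {ε : Fin n → ℤˣ} (hneg : ∃ i, ε i = -1)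
    (hpos : ∃ i, ε i = 1) : Subgroup.normalClosure {signAut ε} =
      (GGamma n 2).comap (ρ n) ⊓ (Subgroup.zpowers (∏ i, ε i)).comap (detρ n) := by
  set N := Subgroup.normalClosure {signAut ε}
  set K := (GGamma n 2).comap (ρ n) ⊓ (Subgroup.zpowers (∏ i, ε i)).comap (detρ n)
  have hK : N ≤ K := by
    have : (GGamma n 2).Normal := MonoidHom.normal_ker _
    refine Subgroup.normalClosure_le_normal (Set.singleton_subset_iff.2 ⟨redGL_ρ_signAut ε, ?_⟩)
    exact (detρ_signAut ε).symm ▸ Subgroup.mem_zpowers _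
  refine le_antisymm hK fun φ hφ => ?_
  let q := QuotientGroup.mk' N
  have hε : q (signAut ε) = 1 :=
    (QuotientGroup.eq_one_iff _).2 (Subgroup.subset_normalClosure rfl)
  have hq : KillsPartialInversion q := ⟨ε, hneg, hpos, hε⟩
  obtain ⟨δ, hδ⟩ := hq.exists_map_eq_map_signAut hn
    (π := QuotientGroup.lift N ((redGL n 2).comp (ρ n)) fun ψ hψ => (hK hψ).1) rfl hφ.1
  have hdet : detρ n (signAut δ) ∈ Subgroup.zpowers (∏ i, ε i) :=
    ((Subgroup.mul_mem_cancel_left K (inv_mem hφ)).1 (hK (QuotientGroup.eq.1 hδ))).2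
  obtain ⟨k, hk⟩ := Subgroup.mem_zpowers_iff.1 (detρ_signAut δ ▸ hdet)
  refine (QuotientGroup.eq_one_iff φ).1 (hδ.trans ?_)
  rw [hq.map_signAut_eq_of_prod_eq (η := ε ^ k) (by
    rw [← hk, ← Finset.prod_zpow]; rfl), _root_.map_zpow, _root_.map_zpow,
    hε, _root_.one_zpow]

end Reduction

/-- For `n ≥ 3`, if `f ∈ Aut(F_n)` sends each generator `x_i` to `x_i^{ε i}` with signs `ε`
taking both values `1` and `-1`, then `IA_n ⊆ N(f)` and `N(f) = ρ⁻¹(Γ_n(2))` if `∏ ε = 1`,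
while `N(f) = ρ⁻¹(GΓ_n(2))` if `∏ ε = -1`. -/
theorem normalClosure_of_partial_inversion (n : ℕ) (hn : 3 ≤ n) (ε : Fin n → ℤˣ)
    (hneg : ∃ i, ε i = -1) (hpos : ∃ i, ε i = 1) (f : FrAut n)
    (hf : ∀ i : Fin n, f (FreeGroup.of i) = FreeGroup.of i ^ ((ε i : ℤ))) :
    IA n ≤ Subgroup.normalClosure {f} ∧
    (∏ i, ε i = 1 → Subgroup.normalClosure {f} = Subgroup.comap (ρ n) (GammaGL n 2)) ∧
    (∏ i, ε i = -1 → Subgroup.normalClosure {f} = Subgroup.comap (ρ n) (GGamma n 2)) := by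
  obtain rfl : f = signAut ε := mulAut_freeGroup_ext fun i => (hf i).trans (signAut_of ε i).symm
  rw [normalClosure_signAut hn hneg hpos]
  refine ⟨fun φ (hφ : ρ n φ = 1) => ⟨?_, ?_⟩, fun hε => ?_, fun hε => ?_⟩
  · exact Subgroup.mem_comap.2 (hφ ▸ one_mem _)
  · have hdet : detρ n φ = 1 := by rw [detρ, MonoidHom.comp_apply, hφ, _root_.map_one]
    exact Subgroup.mem_comap.2 (hdet ▸ one_mem _)
  · rw [hε, Subgroup.zpowers_one_eq_bot]
    rfl
  · have htop : Subgroup.zpowers (-1 : ℤˣ) = ⊤ := by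
      refine (Subgroup.eq_top_iff' _).2 fun u => ?_
      rcases Int.units_eq_one_or u with rfl | rfl
      · exact one_mem _
      · exact Subgroup.mem_zpowers _
    rw [hε, htop, Subgroup.comap_top, inf_top_eq]

end NormalClosurePaper
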